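/- arXiv:1807.10121 — 6 statements merged into one kernel-verified Lean document; each statement's English description precedes it below -/
import Mathlib

section
/- Let α ∈ F_Q^× and 0 ≤ k ≤ n−1. Then α is k-normal for F_Q/F_q if and only if the conventional minimal polynomial m_α of α has degree n − k (equivalently, the minimal q-polynomial M_α of α has degree q^{n−k}). -/
/-!
Write `N = Xⁿ - 1` and `g_β = gpoly q n β`. The telescoping identity
`X g_β - g_{β^q} = β N` of `X_mul_gpoly` (for `β ∈ F_Q`, where `β^(q^n) = β`) and the `F_q`-linearity of `β ↦ g_β`
give `f g_α ≡ g_{f(φ_q)(α)} mod N` for every `f ∈ F_q[X]` (`dvd_map_mul_gpoly_sub`). As `g_β` has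
degree below `n` and vanishes only for `β = 0`, it follows that `N ∣ f g_α` iff `f(φ_q)(α) = 0`
(`dvd_map_mul_gpoly_iff`).

In `F_Q[X]`, the `f` with `N ∣ f g_α` are the multiples of `h = N / gcd(g_α, N)`, normalized to be
monic. The Frobenius `φ_q` applied to coefficients sends `g_α` to `g_{α^q} ≡ X g_α`, and `X` is a
unit mod `N`, so this ideal is stable under `φ_q`; hence so is its monic generator `h`, and
therefore `h ∈ F_q[X]` (`exists_map_eq_of_annihilator`). Consequently `h` also generates `{f ∈ F_q[X] : f(φ_q)(α) = 0}`, that is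
`h = m_α`, and `deg gcd(g_α, N) + deg m_α = n`.
-/

open Polynomial

/-- Evaluation of the `q`-linearized polynomial associated to `f`:
if `f = Σ aᵢ Xⁱ` then `lineval q f α = Σ aᵢ α^(q^i)` (i.e. `f(φ_q)(α)`). -/
noncomputable def lineval {Fq FQ : Type*} [CommSemiring Fq] [CommSemiring FQ] [Algebra Fq FQ]
    (q : ℕ) (f : Polynomial Fq) (α : FQ) : FQ :=
  f.sum fun i a => algebraMap Fq FQ a * α ^ q ^ i

/-- `g_α(X) = Σ_{i=0}^{n-1} α^(q^i) X^(n-1-i) ∈ F_Q[X]`. -/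
noncomputable def gpoly {FQ : Type*} [CommSemiring FQ] (q n : ℕ) (α : FQ) : Polynomial FQ :=
  ∑ i ∈ Finset.range n, Polynomial.C (α ^ q ^ i) * Polynomial.X ^ (n - 1 - i)

/-- `α` is `k`-normal for `F_Q/F_q`: `deg gcd(g_α(X), Xⁿ - 1) = k` in `F_Q[X]`. -/
def IsKNormal {FQ : Type*} [Field FQ] (q n k : ℕ) (α : FQ) : Prop :=
  letI := Classical.decEq (Polynomial FQ)
  (EuclideanDomain.gcd (gpoly q n α) (Polynomial.X ^ n - 1)).natDegree = k

/-- `m` is the conventional minimal polynomial of `α`: the monic generator of the ideal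
`{f ∈ F_q[X] : f(φ_q)(α) = 0}`. -/
def IsMinPoly {Fq FQ : Type*} [CommSemiring Fq] [CommSemiring FQ] [Algebra Fq FQ]
    (q : ℕ) (α : FQ) (m : Polynomial Fq) : Prop :=
  m.Monic ∧ lineval q m α = 0 ∧ ∀ g : Polynomial Fq, lineval q g α = 0 → m ∣ g

section Helpers

variable {Fq FQ : Type*} [Field Fq] [Field FQ] [Algebra Fq FQ]

lemma lineval_add' (q : ℕ) (f g : Fq[X]) (α : FQ) :
    lineval q (f + g) α = lineval q f α + lineval q g α := by
  unfold lineval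
  exact Polynomial.sum_add_index _ _ _ (by simp) (by intros; simp [add_mul])

lemma lineval_C_mul_X_pow (q : ℕ) (a : Fq) (j : ℕ) (α : FQ) :
    lineval q (C a * X ^ j) α = algebraMap Fq FQ a * α ^ q ^ j := by
  unfold lineval
  rw [C_mul_X_pow_eq_monomial, sum_monomial_index _ _ (by simp)]

variable [Fintype Fq]

lemma pow_pow_card_eq (i : ℕ) (x : FQ) :
    x ^ Fintype.card Fq ^ i = (FiniteField.frobeniusAlgHom Fq FQ ^ i) x := by
  rw [AlgHom.coe_pow, FiniteField.coe_frobeniusAlgHom, pow_iterate]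

lemma gpoly_add' (n : ℕ) (β γ : FQ) :
    gpoly (Fintype.card Fq) n (β + γ)
      = gpoly (Fintype.card Fq) n β + gpoly (Fintype.card Fq) n γ := by
  simp only [gpoly, pow_pow_card_eq (Fq := Fq), map_add, add_mul, Finset.sum_add_distrib]

lemma gpoly_algebraMap_mul (n : ℕ) (a : Fq) (β : FQ) :
    gpoly (Fintype.card Fq) n (algebraMap Fq FQ a * β)
      = C (algebraMap Fq FQ a) * gpoly (Fintype.card Fq) n β := by
  simp only [gpoly, pow_pow_card_eq (Fq := Fq), map_mul, AlgHom.commutes, Finset.mul_sum, mul_assoc]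

lemma map_frobenius_gpoly (n : ℕ) (β : FQ) :
    (gpoly (Fintype.card Fq) n β).map (FiniteField.frobeniusAlgHom Fq FQ : FQ →+* FQ)
      = gpoly (Fintype.card Fq) n (β ^ Fintype.card Fq) := by
  simp only [gpoly, Polynomial.map_sum, Polynomial.map_mul, Polynomial.map_pow, map_C, map_X]
  refine Finset.sum_congr rfl fun i _ => ?_
  congr 2
  simp [← pow_mul, mul_comm]

lemma gpoly_coeff (q n : ℕ) (hn : 0 < n) (β : FQ) : (gpoly q n β).coeff (n - 1) = β := by
  simp only [gpoly, finsetSum_coeff, coeff_C_mul, coeff_X_pow]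
  rw [Finset.sum_eq_single 0]
  · simp
  · intro i hi h0
    rw [Finset.mem_range] at hi
    rw [if_neg (by omega), mul_zero]
  · simp [hn.ne']

lemma gpoly_degree_lt (q n : ℕ) (hn : 0 < n) (β : FQ) : (gpoly q n β).degree < n := by
  unfold gpoly
  refine (degree_sum_le _ _).trans_lt ((Finset.sup_lt_iff (WithBot.bot_lt_coe n)).2 fun i _ => ?_)
  exact (degree_C_mul_X_pow_le _ _).trans_lt (WithBot.coe_lt_coe.2 (by simp only [Nat.cast_id]; omega))

lemma X_pow_sub_one_dvd_gpoly_iff (q n : ℕ) (hq : q ≠ 0) (hn : 0 < n) (β : FQ) :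
    (X ^ n - 1 : FQ[X]) ∣ gpoly q n β ↔ β = 0 := by
  constructor
  · intro h
    have h0 : gpoly q n β = 0 := by
      refine eq_zero_of_dvd_of_degree_lt h ?_
      rw [← C_1, degree_X_pow_sub_C hn]
      exact gpoly_degree_lt q n hn β
    rw [← gpoly_coeff q n hn β, h0, coeff_zero]
  · rintro rfl
    simp [gpoly, hq]

/-- The telescoping identity `X g_β = g_{β^q} + β (Xⁿ - 1)`: multiplication by `X` realizes the
Frobenius modulo `Xⁿ - 1`. -/
lemma X_mul_gpoly (q n : ℕ) (β : FQ) (hβ : β ^ q ^ n = β) :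
    X * gpoly q n β = gpoly q n (β ^ q) + C β * (X ^ n - 1) := by
  have e1 : X * gpoly q n β = ∑ i ∈ Finset.range n, C (β ^ q ^ i) * X ^ (n - i) := by
    rw [gpoly, Finset.mul_sum]
    refine Finset.sum_congr rfl fun i hi => ?_
    rw [Finset.mem_range] at hi
    rw [show n - i = n - 1 - i + 1 by omega]
    ring
  have e2 : gpoly q n (β ^ q)
      = ∑ i ∈ Finset.range n, C (β ^ q ^ (i + 1)) * X ^ (n - (i + 1)) := by
    refine Finset.sum_congr rfl fun i _ => ?_
    rw [← pow_mul, ← pow_succ', Nat.sub_sub, add_comm 1 i]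
  have e3 := Finset.sum_range_succ' (fun i => C (β ^ q ^ i) * (X : FQ[X]) ^ (n - i)) n
  rw [Finset.sum_range_succ, ← e1, ← e2, hβ] at e3
  simp only [Nat.sub_self, pow_zero, mul_one, pow_one, Nat.sub_zero] at e3
  linear_combination e3

lemma dvd_X_pow_mul_gpoly_sub [Fintype FQ] (q n : ℕ) (hQ : Fintype.card FQ = q ^ n) (j : ℕ) (α : FQ) :
    (X ^ n - 1 : FQ[X]) ∣ X ^ j * gpoly q n α - gpoly q n (α ^ q ^ j) := by
  induction j with
  | zero => simp
  | succ j ih =>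
    have h := X_mul_gpoly q n (α ^ q ^ j) (by rw [← hQ, FiniteField.pow_card])
    rw [← pow_mul, ← pow_succ] at h
    obtain ⟨c, hc⟩ := ih
    exact ⟨X * c + C (α ^ q ^ j), by linear_combination X * hc + h⟩

lemma dvd_map_mul_gpoly_sub [Fintype FQ] (n : ℕ) (hQ : Fintype.card FQ = Fintype.card Fq ^ n)
    (f : Fq[X]) (α : FQ) :
    (X ^ n - 1 : FQ[X]) ∣ f.map (algebraMap Fq FQ) * gpoly (Fintype.card Fq) n α
      - gpoly (Fintype.card Fq) n (lineval (Fintype.card Fq) f α) := by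
  induction f using Polynomial.induction_on' with
  | add f g hf hg =>
    rw [lineval_add', gpoly_add', Polynomial.map_add]
    convert! dvd_add hf hg using 1
    ring
  | monomial j a =>
    rw [← C_mul_X_pow_eq_monomial, lineval_C_mul_X_pow, gpoly_algebraMap_mul]
    simp only [Polynomial.map_mul, Polynomial.map_pow, map_C, map_X]
    convert! (dvd_X_pow_mul_gpoly_sub _ n hQ j α).mul_left (C (algebraMap Fq FQ a)) using 1
    ring

lemma dvd_map_mul_gpoly_iff [Fintype FQ] (n : ℕ) (hn : 0 < n)
    (hQ : Fintype.card FQ = Fintype.card Fq ^ n) (f : Fq[X]) (α : FQ) :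
    (X ^ n - 1 : FQ[X]) ∣ f.map (algebraMap Fq FQ) * gpoly (Fintype.card Fq) n α
      ↔ lineval (Fintype.card Fq) f α = 0 := by
  rw [← X_pow_sub_one_dvd_gpoly_iff (Fintype.card Fq) n Fintype.card_ne_zero hn]
  exact dvd_iff_dvd_of_dvd_sub (dvd_map_mul_gpoly_sub n hQ f α)

/-- The fixed points of `φ_q` lie in `F_q`, as `X^q - X` already splits completely over `F_q`. -/
lemma mem_range_of_pow_card_eq (x : FQ) (hx : x ^ Fintype.card Fq = x) :
    ∃ a : Fq, algebraMap Fq FQ a = x := by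
  have h1 : (X ^ Fintype.card Fq - X : Fq[X]) = ∏ a : Fq, (X - C a) := by
    have hroots := FiniteField.roots_X_pow_card_sub_X Fq
    have h := prod_multiset_X_sub_C_of_monic_of_roots_card_eq
      (monic_X_pow_sub (n := Fintype.card Fq) (p := (X : Fq[X]))
        (by rw [degree_X]; exact_mod_cast Fintype.one_lt_card)) (by
        rw [hroots, FiniteField.X_pow_card_sub_X_natDegree_eq Fq Fintype.one_lt_card]
        rfl)
    rw [hroots] at h
    exact h.symm
  have h2 := congrArg (aeval x) h1
  simp only [map_sub, map_pow, aeval_X, hx, sub_self, map_prod, aeval_C] at h2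
  obtain ⟨a, -, ha⟩ := Finset.prod_eq_zero_iff.1 h2.symm
  exact ⟨a, (sub_eq_zero.1 ha).symm⟩

/-- The monic generator `h` of the annihilator of `g_α` in `F_Q[X]/(Xⁿ - 1)` has coefficients in
`F_q`, because that annihilator is stable under the Frobenius acting on coefficients. -/
lemma exists_map_eq_of_annihilator [Fintype FQ] (n : ℕ) (hn : 0 < n)
    (hQ : Fintype.card FQ = Fintype.card Fq ^ n) (α : FQ) (h : FQ[X]) (hmon : h.Monic)
    (hN : h ∣ X ^ n - 1)
    (hh : ∀ f : FQ[X], (X ^ n - 1 : FQ[X]) ∣ f * gpoly (Fintype.card Fq) n α ↔ h ∣ f) :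
    ∃ h₀ : Fq[X], h₀.map (algebraMap Fq FQ) = h := by
  set σ : FQ →+* FQ := (FiniteField.frobeniusAlgHom Fq FQ : FQ →+* FQ) with hσ
  have hdvd : h ∣ h.map σ := by
    have h1 := Polynomial.map_dvd σ ((hh h).2 dvd_rfl)
    rw [Polynomial.map_mul, hσ, map_frobenius_gpoly, ← hσ] at h1
    simp only [Polynomial.map_sub, Polynomial.map_pow, map_X, Polynomial.map_one] at h1
    have h2 : (X ^ n - 1 : FQ[X]) ∣ (h.map σ * X) * gpoly (Fintype.card Fq) n α := by
      rw [mul_assoc, X_mul_gpoly _ n α (by rw [← hQ, FiniteField.pow_card]), mul_add]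
      exact dvd_add h1 ((dvd_mul_left _ _).mul_left _)
    have hcop : IsCoprime (X ^ n - 1 : FQ[X]) X := by
      refine ⟨-1, X ^ (n - 1), ?_⟩
      rw [← pow_succ, Nat.sub_add_cancel hn]
      ring
    exact (hcop.of_isCoprime_of_dvd_left hN).dvd_of_dvd_mul_right ((hh _).1 h2)
  have heq : h.map σ = h :=
    eq_of_monic_of_dvd_of_natDegree_le hmon (hmon.map σ) hdvd (natDegree_map σ).le
  have hl : h ∈ Polynomial.lifts (algebraMap Fq FQ) := by
    rw [lifts_iff_coeff_lifts]
    intro i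
    have hi := congrArg (fun f => coeff f i) heq
    rw [coeff_map] at hi
    exact mem_range_of_pow_card_eq _ hi
  exact (mem_lifts h).1 hl

end Helpers

theorem stmt_0 (p m n q k : ℕ) (hp : p.Prime) (hm : 0 < m) (hq : q = p ^ m) (hn : 0 < n)
    {Fq FQ : Type*} [Field Fq] [Fintype Fq] [Field FQ] [Fintype FQ] [Algebra Fq FQ]
    (hcard : Fintype.card Fq = q) (hcardQ : Fintype.card FQ = q ^ n)
    (α : FQ) (hα : α ≠ 0) (hk : k ≤ n - 1)
    (mα : Polynomial Fq) (hmα : IsMinPoly q α mα) :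
    IsKNormal q n k α ↔ mα.natDegree = n - k := by
  clear hq
  subst hcard
  unfold IsKNormal
  obtain ⟨hmm, hm0, hmd⟩ := hmα
  let := Classical.decEq FQ[X]
  change (EuclideanDomain.gcd (gpoly (Fintype.card Fq) n α) (X ^ n - 1)).natDegree = k ↔ _
  set g := gpoly (Fintype.card Fq) n α with hg
  set d := EuclideanDomain.gcd g (X ^ n - 1) with hd
  have hbez : d = _ := EuclideanDomain.gcd_eq_gcd_ab g (X ^ n - 1)
  have hdg : d ∣ g := EuclideanDomain.gcd_dvd_left _ _
  obtain ⟨h', hh'⟩ : d ∣ X ^ n - 1 := EuclideanDomain.gcd_dvd_right _ _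
  have hN0 : (X ^ n - 1 : FQ[X]) ≠ 0 := by
    rw [← C_1]; exact X_pow_sub_C_ne_zero hn 1
  have hd0 : d ≠ 0 := by rintro h; rw [h, zero_mul] at hh'; exact hN0 hh'
  have hh0 : h' ≠ 0 := by rintro h; rw [h, mul_zero] at hh'; exact hN0 hh'
  set h := h' * C h'.leadingCoeff⁻¹ with hh
  have hmon : h.Monic := monic_mul_leadingCoeff_inv hh0
  have hunit : IsUnit (C h'.leadingCoeff⁻¹ : FQ[X]) :=
    isUnit_C.2 (isUnit_iff_ne_zero.2 (inv_ne_zero (leadingCoeff_ne_zero.2 hh0)))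
  -- `N ∣ f g` iff `N ∣ f d` by Bézout, iff `N / d ∣ f`.
  have hann : ∀ f : FQ[X], (X ^ n - 1 : FQ[X]) ∣ f * g ↔ h ∣ f := by
    intro f
    rw [hh, hunit.mul_right_dvd]
    constructor
    · intro hf
      have h1 : (X ^ n - 1 : FQ[X]) ∣ d * f := by
        rw [hbez]
        convert! dvd_add (hf.mul_right (EuclideanDomain.gcdA g (X ^ n - 1)))
          (dvd_mul_right (X ^ n - 1 : FQ[X]) (EuclideanDomain.gcdB g (X ^ n - 1) * f)) using 1
        ring
      rw [hh'] at h1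
      exact (mul_dvd_mul_iff_left hd0).1 h1
    · intro hf
      rw [hh', mul_comm f]
      exact mul_dvd_mul hdg hf
  have hN : h ∣ X ^ n - 1 := by
    rw [hh, hunit.mul_right_dvd, hh']
    exact dvd_mul_left _ _
  obtain ⟨h₀, hh₀⟩ := exists_map_eq_of_annihilator n hn hcardQ α h hmon hN hann
  have hzero : lineval (Fintype.card Fq) h₀ α = 0 := by
    rw [← dvd_map_mul_gpoly_iff n hn hcardQ, hh₀]
    exact (hann h).2 dvd_rfl
  have hle : mα.map (algebraMap Fq FQ) ∣ h := by
    rw [← hh₀]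
    exact Polynomial.map_dvd _ (hmd _ hzero)
  have hge : h ∣ mα.map (algebraMap Fq FQ) :=
    (hann _).1 ((dvd_map_mul_gpoly_iff n hn hcardQ _ _).2 hm0)
  have hdeg : mα.natDegree = h'.natDegree := by
    rw [← natDegree_map (algebraMap Fq FQ),
      eq_of_monic_of_associated (hmm.map _) hmon (associated_of_dvd_dvd hle hge), hh,
      natDegree_mul_leadingCoeff_inv _ hh0]
  have hsum : n = d.natDegree + h'.natDegree := by
    rw [← natDegree_mul hd0 hh0, ← hh', ← C_1, natDegree_X_pow_sub_C]
  omega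
end

section
/- Let α ∈ F_Q^× and 0 ≤ k ≤ n−1, and let V_α be the F_q-linear span of {α, α^q, α^{q^2}, …, α^{q^{n−1}}} in F_Q. Then α is k-normal for F_Q/F_q if and only if dim_{F_q} V_α = n − k; moreover, in that case the n−k elements α, α^q, …, α^{q^{n−k−1}} form an F_q-basis of V_α. -/
/-!
Let `φ` be the `q`-power Frobenius of `F_Q`. In `F_Q[X]/(Xⁿ - 1)` one has `X * g_x = g_{φ x}`, so
`h * g_x = g_{h(φ) x}` for every `h ∈ F_q[X]`, and `g_y = 0` there only when `y = 0`. Hence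
`h(φ) α = 0` iff `Xⁿ - 1 ∣ h * g_α`, i.e. iff `(Xⁿ - 1) / gcd(g_α, Xⁿ - 1)` divides `h`.

The monic gcd `D` has coefficients in `F_q`: applying Frobenius to its coefficients gives a divisor
of `Xⁿ - 1` and of `X * g_α` modulo `Xⁿ - 1`, hence of `D`, and it has the same degree as `D`.
So `P = (Xⁿ - 1) / D` lies in `F_q[X]` and generates the annihilator of `α` in `F_q[X]`
(`exists_annihilator`). Division with remainder by `P` then shows that the first
`deg P = n - deg D` conjugates of `α` form a basis of the span of all of them.
-/

open Polynomial

theorem gpoly_frobenius {Fq FQ : Type*} [Field Fq] [Fintype Fq] [Field FQ] [Algebra Fq FQ]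
    (n : ℕ) (x : FQ) :
    gpoly (Fintype.card Fq) n (FiniteField.frobeniusAlgHom Fq FQ x) =
      (gpoly (Fintype.card Fq) n x).map (FiniteField.frobeniusAlgHom Fq FQ : FQ →+* FQ) := by
  simp [gpoly, Polynomial.map_sum, ← pow_mul, mul_comm]

/-- Modulo `Xⁿ - 1`, multiplication by `X` acts on the polynomials `g_x` as Frobenius acts
on `x`; the sum for `X * g_x - g_{x^q}` telescopes to its first and last terms. -/
theorem X_mul_gpoly_s1 {Fq FQ : Type*} [Field Fq] [Fintype Fq] [Field FQ] [Algebra Fq FQ]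
    (n : ℕ) (hn : 0 < n) (x : FQ) (hx : x ^ Fintype.card Fq ^ n = x) :
    X * gpoly (Fintype.card Fq) n x =
      gpoly (Fintype.card Fq) n (FiniteField.frobeniusAlgHom Fq FQ x) + C x * (X ^ n - 1) := by
  obtain ⟨r, rfl⟩ : ∃ r, n = r + 1 := ⟨n - 1, by omega⟩
  unfold gpoly
  rw [Finset.sum_range_succ', Finset.sum_range_succ, mul_add, Finset.mul_sum]
  have hs : ∀ i ∈ Finset.range r,
      X * (C (x ^ Fintype.card Fq ^ (i + 1)) * X ^ (r + 1 - 1 - (i + 1))) =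
      C ((FiniteField.frobeniusAlgHom Fq FQ x) ^ Fintype.card Fq ^ i) *
        (X : FQ[X]) ^ (r + 1 - 1 - i) := by
    intro i hi
    have hi' : r + 1 - 1 - i = (r + 1 - 1 - (i + 1)) + 1 := by
      have := Finset.mem_range.1 hi
      omega
    rw [hi', FiniteField.frobeniusAlgHom_apply, ← pow_mul, pow_succ (X : FQ[X]), pow_succ' _ i]
    ring
  rw [Finset.sum_congr rfl hs]
  have hl : (FiniteField.frobeniusAlgHom Fq FQ x) ^ Fintype.card Fq ^ r = x := by
    rw [FiniteField.frobeniusAlgHom_apply, ← pow_mul, ← pow_succ', hx]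
  rw [hl]
  simp
  ring

theorem gpoly_add {Fq FQ : Type*} [Field Fq] [Fintype Fq] [Field FQ] [Algebra Fq FQ]
    (n : ℕ) (x y : FQ) :
    gpoly (Fintype.card Fq) n (x + y) =
      gpoly (Fintype.card Fq) n x + gpoly (Fintype.card Fq) n y := by
  have h : ∀ i : ℕ, (x + y) ^ Fintype.card Fq ^ i =
      x ^ Fintype.card Fq ^ i + y ^ Fintype.card Fq ^ i := by
    intro i
    have := map_add ((FiniteField.frobeniusAlgHom Fq FQ) ^ i) x y
    simpa [AlgHom.coe_pow, FiniteField.coe_frobeniusAlgHom, pow_iterate] using this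
  simp [gpoly, h, add_mul, Finset.sum_add_distrib]

theorem gpoly_smul {Fq FQ : Type*} [Field Fq] [Fintype Fq] [Field FQ] [Algebra Fq FQ]
    (n : ℕ) (c : Fq) (x : FQ) :
    gpoly (Fintype.card Fq) n (c • x) =
      C (algebraMap Fq FQ c) * gpoly (Fintype.card Fq) n x := by
  have h : ∀ i : ℕ, (c • x) ^ Fintype.card Fq ^ i = c • x ^ Fintype.card Fq ^ i := by
    intro i
    rw [_root_.smul_pow, FiniteField.pow_card_pow]
  simp only [gpoly, h]
  simp only [Algebra.smul_def, Finset.mul_sum, C_mul, mul_assoc]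

/-- Holds because `g_y` has degree below `n` and its coefficient of `X^(n-1)` is `y`. -/
theorem dvd_gpoly_iff {FQ : Type*} [Field FQ] (q n : ℕ) (hq : 0 < q) (hn : 0 < n) (y : FQ) :
    (X ^ n - 1 : FQ[X]) ∣ gpoly q n y ↔ y = 0 := by
  constructor
  · intro h
    have hdeg : (gpoly q n y).degree < (X ^ n - 1 : FQ[X]).degree := by
      rw [← C_1, degree_X_pow_sub_C hn]
      unfold gpoly
      refine lt_of_le_of_lt (degree_sum_le _ _) ?_
      rw [Finset.sup_lt_iff (by exact_mod_cast WithBot.bot_lt_coe n)]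
      intro i _
      refine lt_of_le_of_lt (degree_C_mul_X_pow_le _ _) ?_
      exact_mod_cast (by omega : n - 1 - i < n)
    have h0 := eq_zero_of_dvd_of_degree_lt h hdeg
    have hc : (gpoly q n y).coeff (n - 1) = y := by
      unfold gpoly
      rw [finsetSum_coeff, Finset.sum_eq_single 0]
      · simp
      · intro i hi hi0
        have := Finset.mem_range.1 hi
        rw [coeff_C_mul_X_pow, if_neg (by omega)]
      · simp [hn.ne']
    rw [← hc, h0, coeff_zero]
  · rintro rfl
    have : gpoly q n (0 : FQ) = 0 := by
      unfold gpoly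
      refine Finset.sum_eq_zero fun i _ => ?_
      rw [zero_pow (pow_pos hq i).ne', C_0, zero_mul]
    rw [this]
    exact dvd_zero _

/-- `h * g_x = g_{h(φ) x}` in `F_Q[X]/(Xⁿ - 1)`, with `φ` the `q`-power Frobenius. -/
theorem dvd_map_mul_gpoly_sub_s1 {Fq FQ : Type*} [Field Fq] [Fintype Fq] [Field FQ] [Algebra Fq FQ]
    (n : ℕ) (hn : 0 < n) (hFQ : ∀ x : FQ, x ^ Fintype.card Fq ^ n = x) (h : Fq[X]) (x : FQ) :
    (X ^ n - 1 : FQ[X]) ∣ h.map (algebraMap Fq FQ) * gpoly (Fintype.card Fq) n x -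
      gpoly (Fintype.card Fq) n
        (aeval (FiniteField.frobeniusAlgHom Fq FQ).toLinearMap h x) := by
  induction h using Polynomial.induction_on generalizing x with
  | C a =>
    simp [gpoly_smul]
  | add f g hf hg =>
    rw [map_add, LinearMap.add_apply, gpoly_add, Polynomial.map_add]
    convert dvd_add (hf x) (hg x) using 1
    ring
  | monomial i a ih =>
    have h1 := ih (FiniteField.frobeniusAlgHom Fq FQ x)
    have h2 : aeval (FiniteField.frobeniusAlgHom Fq FQ).toLinearMap (C a * X ^ (i + 1)) x =
        aeval (FiniteField.frobeniusAlgHom Fq FQ).toLinearMap (C a * X ^ i)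
          (FiniteField.frobeniusAlgHom Fq FQ x) := by
      rw [pow_succ, ← mul_assoc, map_mul, aeval_X, Module.End.mul_apply]
      rfl
    rw [h2]
    have h3 : (C a * X ^ (i + 1) : Fq[X]).map (algebraMap Fq FQ) =
        (C a * X ^ i : Fq[X]).map (algebraMap Fq FQ) * X := by
      rw [pow_succ, ← mul_assoc, Polynomial.map_mul, Polynomial.map_X]
    rw [h3, mul_assoc, X_mul_gpoly_s1 n hn x (hFQ x), mul_add, add_sub_right_comm]
    exact dvd_add h1 (dvd_mul_of_dvd_right (dvd_mul_left _ _) _)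

theorem aeval_frobenius_eq_zero_iff {Fq FQ : Type*} [Field Fq] [Fintype Fq] [Field FQ]
    [Algebra Fq FQ] (n : ℕ) (hn : 0 < n) (hFQ : ∀ x : FQ, x ^ Fintype.card Fq ^ n = x)
    (h : Fq[X]) (x : FQ) :
    aeval (FiniteField.frobeniusAlgHom Fq FQ).toLinearMap h x = 0 ↔
      (X ^ n - 1 : FQ[X]) ∣ h.map (algebraMap Fq FQ) * gpoly (Fintype.card Fq) n x := by
  rw [← dvd_gpoly_iff (Fintype.card Fq) n Fintype.card_pos hn,
    ← dvd_iff_dvd_of_dvd_sub (dvd_map_mul_gpoly_sub_s1 n hn hFQ h x)]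

theorem mem_range_algebraMap_of_pow_card {Fq FQ : Type*} [Field Fq] [Fintype Fq] [Field FQ]
    [Algebra Fq FQ] (x : FQ) (hx : x ^ Fintype.card Fq = x) :
    x ∈ Set.range (algebraMap Fq FQ) := by
  classical
  have hprod : (X ^ Fintype.card Fq - X : Fq[X]) = ∏ a : Fq, (X - C a) := by
    have hm : (X ^ Fintype.card Fq - X : Fq[X]).Monic :=
      monic_X_pow_sub (by rw [degree_X]; exact_mod_cast Fintype.one_lt_card)
    have hr := FiniteField.roots_X_pow_card_sub_X Fq
    have := prod_multiset_X_sub_C_of_monic_of_roots_card_eq hm (by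
      rw [hr, FiniteField.X_pow_card_sub_X_natDegree_eq Fq Fintype.one_lt_card]
      rfl)
    rw [hr] at this
    exact this.symm
  have h0 : aeval x (∏ a : Fq, (X - C a)) = 0 := by
    rw [← hprod]
    simp [hx]
  rw [map_prod, Finset.prod_eq_zero_iff] at h0
  obtain ⟨a, _, ha⟩ := h0
  refine ⟨a, ?_⟩
  rw [map_sub, aeval_X, aeval_C, sub_eq_zero] at ha
  exact ha.symm

/-- The annihilator of `x` in `F_q[X]`, acting through Frobenius, is generated by
`P = (Xⁿ - 1) / gcd(g_x, Xⁿ - 1)`. The monic gcd is invariant under Frobenius on coefficients,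
so it descends to `F_q`, and `P` with it. -/
theorem exists_annihilator {Fq FQ : Type*} [Field Fq] [Fintype Fq] [Field FQ]
    [Algebra Fq FQ] [DecidableEq FQ[X]] (n : ℕ) (hn : 0 < n)
    (hFQ : ∀ x : FQ, x ^ Fintype.card Fq ^ n = x) (x : FQ) :
    ∃ P : Fq[X], P.Monic ∧
      (EuclideanDomain.gcd (gpoly (Fintype.card Fq) n x) (X ^ n - 1)).natDegree + P.natDegree = n ∧
      ∀ h : Fq[X], aeval (FiniteField.frobeniusAlgHom Fq FQ).toLinearMap h x = 0 ↔ P ∣ h := by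
  set g := gpoly (Fintype.card Fq) n x with hg
  set G := EuclideanDomain.gcd g (X ^ n - 1) with hG
  have hmon : (X ^ n - 1 : FQ[X]).Monic := by
    simpa using monic_X_pow_sub_C (1 : FQ) hn.ne'
  have hmon' : (X ^ n - 1 : Fq[X]).Monic := by
    simpa using monic_X_pow_sub_C (1 : Fq) hn.ne'
  have hG0 : G ≠ 0 := fun h => hmon.ne_zero (EuclideanDomain.gcd_eq_zero_iff.1 h).2
  have hlc : G.leadingCoeff⁻¹ ≠ 0 := inv_ne_zero (leadingCoeff_ne_zero.2 hG0)
  set D := G * C G.leadingCoeff⁻¹ with hD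
  have hDmon : D.Monic := monic_mul_leadingCoeff_inv hG0
  have hDdeg : D.natDegree = G.natDegree := natDegree_mul_C hlc
  have hDG : Associated G D := associated_mul_unit_right _ _ (isUnit_C.2 hlc.isUnit)
  have hDg : D ∣ g := hDG.symm.dvd.trans (EuclideanDomain.gcd_dvd_left _ _)
  have hDX : D ∣ X ^ n - 1 := hDG.symm.dvd.trans (EuclideanDomain.gcd_dvd_right _ _)
  set φ : FQ →+* FQ := (FiniteField.frobeniusAlgHom Fq FQ : FQ →+* FQ) with hφ
  have hφD : D.map φ = D := by
    have h1 : D.map φ ∣ X ^ n - 1 := by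
      simpa using Polynomial.map_dvd φ hDX
    have h2 : D.map φ ∣ g := by
      have h3 : D.map φ ∣ X * g := by
        rw [hg, X_mul_gpoly_s1 n hn x (hFQ x), gpoly_frobenius]
        exact dvd_add (Polynomial.map_dvd φ hDg) (dvd_mul_of_dvd_right h1 _)
      -- `X` is a unit modulo `Xⁿ - 1`
      have h4 : g = X ^ (n - 1) * (X * g) - (X ^ n - 1) * g := by
        rw [← mul_assoc, ← pow_succ, Nat.sub_add_cancel hn]
        ring
      rw [h4]
      exact dvd_sub (dvd_mul_of_dvd_right h3 _) (dvd_mul_of_dvd_left h1 _)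
    refine (eq_of_monic_of_dvd_of_natDegree_le (hDmon.map φ) hDmon
      ((EuclideanDomain.dvd_gcd h2 h1).trans hDG.dvd) ?_).symm
    rw [natDegree_map]
  obtain ⟨D₀, hD₀, -, hD₀mon⟩ : ∃ D₀ : Fq[X], D₀.map (algebraMap Fq FQ) = D ∧
      D₀.natDegree = D.natDegree ∧ D₀.Monic := by
    refine lifts_and_natDegree_eq_and_monic ((lifts_iff_coeff_lifts _).2 fun i => ?_) hDmon
    refine mem_range_algebraMap_of_pow_card _ ?_
    have := congrArg (fun f => coeff f i) hφD
    simpa [hφ, coeff_map] using this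
  obtain ⟨P, hP⟩ : D₀ ∣ X ^ n - 1 := by
    rw [← map_dvd_map' (algebraMap Fq FQ), hD₀]
    simpa using hDX
  have hPmon : P.Monic := hD₀mon.of_mul_monic_left (hP ▸ hmon')
  have hPX : (X ^ n - 1 : FQ[X]) = D * P.map (algebraMap Fq FQ) := by
    have := congrArg (Polynomial.map (algebraMap Fq FQ)) hP
    simpa [hD₀] using this
  refine ⟨P, hPmon, ?_, fun h => ?_⟩
  · have h1 := congrArg natDegree hPX
    rw [hDmon.natDegree_mul (hPmon.map _), natDegree_map, hDdeg, ← C_1,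
      natDegree_X_pow_sub_C] at h1
    exact h1.symm
  · rw [aeval_frobenius_eq_zero_iff n hn hFQ, ← hg, ← map_dvd_map' (algebraMap Fq FQ), hPX]
    obtain ⟨g', hg'⟩ := hDg
    have hcop : IsCoprime (P.map (algebraMap Fq FQ)) g' := by
      have hb := EuclideanDomain.gcd_eq_gcd_ab g (X ^ n - 1)
      obtain ⟨u, hu⟩ := hDG
      refine ⟨EuclideanDomain.gcdB g (X ^ n - 1) * u, EuclideanDomain.gcdA g (X ^ n - 1) * u, ?_⟩
      apply mul_left_cancel₀ hDmon.ne_zero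
      rw [mul_one]
      calc D * (EuclideanDomain.gcdB g (X ^ n - 1) * u * P.map (algebraMap Fq FQ) +
            EuclideanDomain.gcdA g (X ^ n - 1) * u * g')
          = (D * g' * EuclideanDomain.gcdA g (X ^ n - 1) +
            D * P.map (algebraMap Fq FQ) * EuclideanDomain.gcdB g (X ^ n - 1)) * u := by ring
        _ = D := by rw [← hg', ← hPX, ← hb, ← hG, hu]
    rw [hg', mul_left_comm, mul_dvd_mul_iff_left hDmon.ne_zero]
    exact ⟨hcop.dvd_of_dvd_mul_right, fun hd => dvd_mul_of_dvd_left hd _⟩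

theorem stmt_1 (p m n q k : ℕ) (hp : p.Prime) (hm : 0 < m) (hq : q = p ^ m) (hn : 0 < n)
    {Fq FQ : Type*} [Field Fq] [Fintype Fq] [Field FQ] [Fintype FQ] [Algebra Fq FQ]
    (hcard : Fintype.card Fq = q) (hcardQ : Fintype.card FQ = q ^ n)
    (α : FQ) (hα : α ≠ 0) (hk : k ≤ n - 1) :
    (IsKNormal q n k α ↔
      Module.finrank Fq
        ↥(Submodule.span Fq (Set.range fun i : Fin n => α ^ q ^ (i : ℕ))) = n - k) ∧
    (IsKNormal q n k α →
      LinearIndependent Fq (fun i : Fin (n - k) => α ^ q ^ (i : ℕ)) ∧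
      Submodule.span Fq (Set.range fun i : Fin (n - k) => α ^ q ^ (i : ℕ)) =
        Submodule.span Fq (Set.range fun i : Fin n => α ^ q ^ (i : ℕ))) := by
  subst hcard
  have hFQ : ∀ x : FQ, x ^ Fintype.card Fq ^ n = x := fun x => by
    rw [← hcardQ, FiniteField.pow_card]
  classical
  obtain ⟨P, hPmon, hdeg, hann⟩ := exists_annihilator (Fq := Fq) n hn hFQ α
  set φ := (FiniteField.frobeniusAlgHom Fq FQ).toLinearMap with hφ
  have hpow : ∀ i : ℕ, α ^ Fintype.card Fq ^ i = (φ ^ i) α := fun i => by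
    rw [Module.End.coe_pow, hφ, AlgHom.coe_toLinearMap, FiniteField.coe_frobeniusAlgHom,
      pow_iterate]
  have hli : LinearIndependent Fq (fun i : Fin P.natDegree => α ^ Fintype.card Fq ^ (i : ℕ)) := by
    rw [Fintype.linearIndependent_iff]
    intro c hc
    have h0 : aeval φ (∑ i : Fin P.natDegree, C (c i) * X ^ (i : ℕ)) α = 0 := by
      rw [← hc]
      simp [hpow, LinearMap.sum_apply]
    have hz := eq_zero_of_dvd_of_degree_lt ((hann _).1 h0)
      (by rw [degree_eq_natDegree hPmon.ne_zero]; exact degree_sum_fin_lt c)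
    intro i
    have := congrArg (fun f => coeff f (i : ℕ)) hz
    simpa [finsetSum_coeff, coeff_X_pow, Fin.val_inj] using this
  have hspan : Submodule.span Fq (Set.range fun i : Fin P.natDegree =>
        α ^ Fintype.card Fq ^ (i : ℕ)) =
      Submodule.span Fq (Set.range fun i : Fin n => α ^ Fintype.card Fq ^ (i : ℕ)) := by
    apply le_antisymm
    · apply Submodule.span_mono
      rintro _ ⟨i, rfl⟩
      exact ⟨⟨i, by omega⟩, rfl⟩
    · rw [Submodule.span_le]
      rintro _ ⟨j, rfl⟩
      have h1 : (φ ^ (j : ℕ)) α = aeval φ ((X ^ (j : ℕ)) %ₘ P) α := by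
        have h2 := congrArg (fun f => aeval φ f α) (modByMonic_add_div (X ^ (j : ℕ)) P)
        have h3 : aeval φ (P * (X ^ (j : ℕ) /ₘ P)) α = 0 := (hann _).2 (dvd_mul_right _ _)
        simp only [map_add, LinearMap.add_apply, h3, add_zero] at h2
        rw [h2]
        simp
      simp only [SetLike.mem_coe]
      have h4 : (X ^ (j : ℕ) %ₘ P).degree < P.natDegree := by
        rw [← degree_eq_natDegree hPmon.ne_zero]
        exact degree_modByMonic_lt _ hPmon
      rw [hpow, h1, aeval_def, eval₂_eq_sum, sum_def, LinearMap.sum_apply]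
      refine Submodule.sum_mem _ fun i hi => ?_
      rw [← Algebra.smul_def, LinearMap.smul_apply, ← hpow]
      refine Submodule.smul_mem _ _ (Submodule.subset_span ⟨⟨i, ?_⟩, rfl⟩)
      exact_mod_cast (le_degree_of_mem_supp i hi).trans_lt h4
  have hfr := finrank_span_eq_card hli
  rw [hspan, Fintype.card_fin] at hfr
  have hk' : IsKNormal (Fintype.card Fq) n k α ↔ P.natDegree = n - k := by
    have : IsKNormal (Fintype.card Fq) n k α ↔
        (EuclideanDomain.gcd (gpoly (Fintype.card Fq) n α) (X ^ n - 1)).natDegree = k := by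
      unfold IsKNormal
      convert Iff.rfl
    rw [this]
    omega
  refine ⟨by rw [hfr, hk'], fun h => ?_⟩
  rw [← hk'.1 h]
  exact ⟨hli, hspan⟩
end

section
/- Assume gcd(n, q) = 1. Let A_1 = {0}, A_2, …, A_s be the q-equivalence classes of Z/nZ, pick a representative a_i ∈ A_i for each i, let ζ be a primitive n-th root of unity in an extension field E of F_q, and for 1 ≤ i ≤ s let p_i(X) = ∏_{a∈A_i}(X − ζ^a), so that p_1, …, p_s are the distinct monic irreducible factors of X^n − 1 in F_q[X]. Let ε_i(X) = Σ_{a∈A_i} X^a ∈ F_q[X], and let e_i ∈ F_q[X] be the polynomial of degree < n with e_i ≡ δ_{ij} (mod p_j) for all j. Then the s×s matrix M = (ε_i(ζ^{a_j}))_{1≤i,j≤s} has all entries in (the image of) F_q, det M ≠ 0, and for each i one has e_i(X) ≡ Σ_{j=1}^{s} (M^{−1})_{ij} ε_j(X) (mod X^n − 1). -/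
/-!
Each class `A i` is stable under multiplication by `q`, so `ε i` takes the same value at `x` and at
`x ^ q` whenever `x ^ n = 1` (`aeval_coset_pow`). Since `ε i` has coefficients in `F_q`, its value
at `x ^ q` is also the `q`-th power of its value at `x`. Hence the values are fixed by the
`q`-Frobenius, so they lie in `F_q` (`mem_range_algebraMap_of_pow_card_eq`), and
`b ↦ ε i (ζ ^ b)` is constant on every class.

A polynomial over `E` vanishing at all `ζ ^ b` is divisible by `X ^ n - 1`
(`X_pow_sub_one_dvd_of_eval_eq_zero`). If `v ᵥ* M = 0`, then `∑ i, v i * ε i` vanishes at all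
`ζ ^ b` and has degree less than `n`, so it is zero; its coefficient at `X ^ a i` is `v i`, so
`v = 0`. This gives `det M ≠ 0`. Finally `e i (ζ ^ b) = δ_{ij}` for `b ∈ A j`, and so is the value
of `∑ k, M⁻¹ i k * ε k`, namely `(M⁻¹ * M) i j`; the same divisibility criterion concludes.
-/

open Polynomial

/-- The fixed points of the `q`-Frobenius on an extension of `F_q` are the elements of `F_q`:
`X ^ q - X` already has its `q` roots in `F_q`. -/
lemma mem_range_algebraMap_of_pow_card_eq {Fq E : Type*} [Field Fq] [Fintype Fq] [Field E]
    [Algebra Fq E] (x : E) (hx : x ^ Fintype.card Fq = x) :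
    x ∈ Set.range (algebraMap Fq E) := by
  have hsplit : (X ^ Fintype.card Fq - X : Fq[X]).Splits := by
    rw [splits_iff_card_roots, FiniteField.roots_X_pow_card_sub_X, ← Finset.card_def,
      Finset.card_univ, FiniteField.X_pow_card_sub_X_natDegree_eq _ Fintype.one_lt_card]
  have h0 : (X ^ Fintype.card Fq - X : E[X]) ≠ 0 :=
    FiniteField.X_pow_card_sub_X_ne_zero _ Fintype.one_lt_card
  have hmem : x ∈ ((X ^ Fintype.card Fq - X : Fq[X]).map (algebraMap Fq E)).roots := by
    simp [h0, hx]
  rw [hsplit.roots_map, Multiset.mem_map] at hmem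
  obtain ⟨y, -, hy⟩ := hmem
  exact ⟨y, hy⟩

lemma pow_val_natCast {E : Type*} [Field E] {n : ℕ} {ζ : E} (hζ : IsPrimitiveRoot ζ n) (k : ℕ) :
    ζ ^ (k : ZMod n).val = ζ ^ k := by
  rw [ZMod.val_natCast, hζ.eq_orderOf, pow_mod_orderOf]

lemma X_pow_sub_one_dvd_of_eval_eq_zero {E : Type*} [Field E] {n : ℕ} (hn : 0 < n) {ζ : E}
    (hζ : IsPrimitiveRoot ζ n) (G : E[X]) (hG : ∀ b : ZMod n, G.eval (ζ ^ b.val) = 0) :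
    (X ^ n - 1 : E[X]) ∣ G := by
  rw [X_pow_sub_one_eq_prod hn hζ]
  refine Finset.prod_dvd_of_coprime
    (fun r _ t _ h => pairwise_coprime_X_sub_C Function.injective_id h) fun r hr => ?_
  rw [mem_nthRootsFinset hn] at hr
  have : NeZero n := ⟨hn.ne'⟩
  obtain ⟨k, -, rfl⟩ := hζ.eq_pow_of_pow_eq_one hr
  rw [dvd_iff_isRoot, IsRoot.def, ← pow_val_natCast hζ k]
  exact hG k

/-- The exponent sum over a set `S` stable under multiplication by the unit `q` takes the same value
at `ζ ^ b` and at its `q`-th power, because multiplication by `q` permutes `S`. -/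
lemma aeval_coset_pow {Fq E : Type*} [Field Fq] [Field E] [Algebra Fq E] {n q : ℕ} [NeZero n]
    (hgcd : Nat.gcd n q = 1) {ζ : E} (hζ : IsPrimitiveRoot ζ n) (S : Finset (ZMod n))
    (hS : ∀ c ∈ S, c * (q : ZMod n) ∈ S) (b : ℕ) :
    aeval ((ζ ^ b) ^ q) (∑ c ∈ S, X ^ c.val : Fq[X]) =
      aeval (ζ ^ b) (∑ c ∈ S, X ^ c.val : Fq[X]) := by
  have hu : IsUnit (q : ZMod n) := (ZMod.isUnit_iff_coprime q n).2 (Nat.coprime_comm.1 hgcd)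
  have hinj : Set.InjOn (fun c : ZMod n => c * (q : ZMod n)) S :=
    fun c _ d _ h => hu.mul_right_cancel h
  simp only [map_sum, map_pow, aeval_X]
  refine Finset.sum_bij (fun c _ => c * (q : ZMod n)) hS (fun c hc d hd h => hinj hc hd h)
    (fun d hd => ?_) fun c _ => ?_
  · obtain ⟨c, hc, h⟩ := Finset.surjOn_of_injOn_of_card_le _ (fun c hc => hS c hc) hinj le_rfl hd
    exact ⟨c, hc, h⟩
  · have h : c * (q : ZMod n) = ((c.val * q : ℕ) : ZMod n) := by simp
    have h2 : ζ ^ (c * (q : ZMod n)).val = ζ ^ (c.val * q) := by rw [h, pow_val_natCast hζ]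
    rw [← pow_mul ζ b (c * (q : ZMod n)).val, mul_comm b, pow_mul, h2]
    ring

theorem stmt_6 (p m n q s : ℕ) (hp : p.Prime) (hm : 0 < m) (hq : q = p ^ m) (hn : 0 < n)
    {Fq E : Type*} [Field Fq] [Fintype Fq] [Field E] [Algebra Fq E]
    (hcard : Fintype.card Fq = q) (hgcd : Nat.gcd n q = 1)
    -- the q-equivalence classes `A i` of `ZMod n`, with representatives `a i`
    (A : Fin s → Finset (ZMod n)) (a : Fin s → ZMod n)
    (ha : ∀ i, a i ∈ A i)
    (hpart : ∀ b : ZMod n, ∃! i, b ∈ A i)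
    (hclass : ∀ i, ∀ b : ZMod n, b ∈ A i ↔ ∃ t : ℕ, b = a i * (q : ZMod n) ^ t)
    -- a primitive n-th root of unity in an extension `E` of `F_q`
    (ζ : E) (hζ : IsPrimitiveRoot ζ n)
    -- the monic irreducible factors `p i (X) = ∏_{a ∈ A i} (X - ζ^a)` of `Xⁿ - 1` in `F_q[X]`
    (P : Fin s → Polynomial Fq) (hmono : ∀ i, (P i).Monic) (hirr : ∀ i, Irreducible (P i))
    (hP : ∀ i, (P i).map (algebraMap Fq E) =
      ∏ b ∈ A i, (Polynomial.X - Polynomial.C (ζ ^ b.val)))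
    (hprod : ∏ i, P i = Polynomial.X ^ n - 1)
    -- the idempotents `e i ≡ δ_{ij} (mod P j)`
    (e : Fin s → Polynomial Fq) (hdeg : ∀ i, (e i).degree < n)
    (hcong : ∀ i j, e i %ₘ P j = if i = j then 1 else 0)
    -- `ε i (X) = Σ_{a ∈ A i} X^a ∈ F_q[X]`
    (ε : Fin s → Polynomial Fq)
    (hε : ∀ i, ε i = ∑ b ∈ A i, Polynomial.X ^ b.val)
    -- the matrix `M = (ε_i(ζ^{a_j}))`
    (M : Matrix (Fin s) (Fin s) E)
    (hM : ∀ i j, M i j = Polynomial.aeval (ζ ^ (a j).val) (ε i)) :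
    (∀ i j, M i j ∈ Set.range (algebraMap Fq E)) ∧
    M.det ≠ 0 ∧
    ∀ i, (Polynomial.X ^ n - 1 : Polynomial E) ∣
      ((e i).map (algebraMap Fq E) -
        ∑ j, Polynomial.C (M⁻¹ i j) * (ε j).map (algebraMap Fq E)) := by
  classical
  have : NeZero n := ⟨hn.ne'⟩
  have hstab : ∀ i, ∀ c ∈ A i, c * (q : ZMod n) ∈ A i := by
    intro i c hc
    obtain ⟨t, rfl⟩ := (hclass i c).1 hc
    exact (hclass i _).2 ⟨t + 1, by ring⟩
  have hperm : ∀ i (b : ℕ), aeval ((ζ ^ b) ^ q) (ε i) = aeval (ζ ^ b) (ε i) := by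
    intro i b
    rw [hε i]
    exact aeval_coset_pow hgcd hζ (A i) (hstab i) b
  have hconst : ∀ i j, ∀ b ∈ A j, aeval (ζ ^ b.val) (ε i) = M i j := by
    intro i j b hb
    obtain ⟨t, rfl⟩ := (hclass j b).1 hb
    have h : a j * (q : ZMod n) ^ t = (((a j).val * q ^ t : ℕ) : ZMod n) := by simp
    rw [h, pow_val_natCast hζ, hM]
    clear h hb
    induction t with
    | zero => simp
    | succ t ih => rw [pow_succ, ← mul_assoc, pow_mul, hperm, ih]
  have hdet : M.det ≠ 0 := by
    intro h0
    obtain ⟨v, hv, hvM⟩ := Matrix.exists_vecMul_eq_zero_iff.2 h0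
    apply hv
    set G : E[X] := ∑ i, C (v i) * (ε i).map (algebraMap Fq E) with hG
    have hdvd : (X ^ n - 1 : E[X]) ∣ G := by
      refine X_pow_sub_one_dvd_of_eval_eq_zero hn hζ G fun b => ?_
      obtain ⟨j, hj, -⟩ := hpart b
      have := congrFun hvM j
      simp only [Matrix.vecMul, dotProduct, Pi.zero_apply] at this
      rw [hG, eval_finsetSum, ← this]
      refine Finset.sum_congr rfl fun i _ => ?_
      rw [eval_mul, eval_C, eval_map_algebraMap, hconst i j b hj]
    have hdegG : G.degree < (X ^ n - 1 : E[X]).degree := by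
      rw [← C_1, degree_X_pow_sub_C hn, ← mem_degreeLT]
      refine Submodule.sum_mem _ fun i _ => ?_
      rw [← smul_eq_C_mul]
      refine Submodule.smul_mem _ _ ?_
      rw [hε i, Polynomial.map_sum]
      refine Submodule.sum_mem _ fun c _ => ?_
      rw [Polynomial.map_pow, map_X, mem_degreeLT, degree_X_pow]
      exact_mod_cast ZMod.val_lt c
    have hG0 : G = 0 := eq_zero_of_dvd_of_degree_lt hdvd hdegG
    ext k
    have hcoeff : ∀ i, ((ε i).map (algebraMap Fq E)).coeff (a k).val = if i = k then 1 else 0 := by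
      intro i
      have hik : a k ∈ A i ↔ i = k :=
        ⟨fun h => (hpart (a k)).unique h (ha k), fun h => h ▸ ha i⟩
      rw [hε i, Polynomial.map_sum]
      simp [coeff_X_pow, (ZMod.val_injective n).eq_iff, hik]
    have := congrArg (fun f : E[X] => f.coeff (a k).val) hG0
    simpa [hG, finsetSum_coeff, coeff_C_mul, hcoeff] using this
  refine ⟨fun i j => ?_, hdet, fun i => ?_⟩
  · apply mem_range_algebraMap_of_pow_card_eq
    rw [hM, ← map_pow, ← FiniteField.expand_card, expand_aeval, hcard, hperm]
  · refine X_pow_sub_one_dvd_of_eval_eq_zero hn hζ _ fun b => ?_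
    obtain ⟨j, hj, -⟩ := hpart b
    have hPb : aeval (ζ ^ b.val) (P j) = 0 := by
      rw [← eval_map_algebraMap, hP j, eval_prod]
      exact Finset.prod_eq_zero hj (by simp)
    have he : aeval (ζ ^ b.val) (e i) = (1 : Matrix (Fin s) (Fin s) E) i j := by
      rw [← modByMonic_add_div (e i) (P j), hcong i j, Matrix.one_apply]
      split_ifs <;> simp [hPb]
    have hsum : ∑ k, M⁻¹ i k * M k j = (1 : Matrix (Fin s) (Fin s) E) i j := by
      rw [← Matrix.nonsing_inv_mul M (isUnit_iff_ne_zero.2 hdet), Matrix.mul_apply]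
    rw [eval_sub, eval_map_algebraMap, he, eval_finsetSum, ← hsum, sub_eq_zero]
    refine Finset.sum_congr rfl fun k _ => ?_
    rw [eval_mul, eval_C, eval_map_algebraMap, hconst k j b hj]
end

section
/- Let p and n be prime numbers with n ≠ p, q = p^m, Q = q^n, and suppose that the multiplicative order of q modulo n is n − 1 (i.e., q generates (Z/nZ)^×). If α ∈ F_Q^× satisfies α ∉ F_q and Tr(α) ≠ 0, then the conventional minimal polynomial of α is m_α(X) = X^n − 1, and α is 0-normal (i.e., a normal element) for F_Q/F_q. -/
/-!
Write `Φ = 1 + X + ⋯ + X^(n-1)`, so `X^n - 1 = Φ * (X - 1)`. Over a field with `p ^ f` elements,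
every irreducible factor of `Φ` has degree the order of `p ^ f` modulo `n`. For `F_q` this order is
`n - 1` by hypothesis, and since `q ^ n ≡ q` modulo `n` (Fermat) the same holds for `F_Q`. Hence `Φ`
is irreducible over both fields (`irreducible_cyclotomic_of_card`).

*Minimal polynomial.* Let `F_q[X]` act on `F_Q` through the Frobenius `φ`; `X^n - 1` acts as zero.
Suppose `g` annihilates `α`. If `g` were coprime to `Φ`, then `X - 1` would lie in the ideal
generated by `X^n - 1` and `g`, so `α ^ q = α` and `α ∈ F_q`, which is excluded; thus `Φ ∣ g`.
If `g` were coprime to `X - 1`, then likewise `Φ` would annihilate `α`, that is `Tr α = 0`, also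
excluded; thus `X - 1 ∣ g`. As `Φ` and `X - 1` are coprime (`Φ(1) = n ≠ 0`), `X^n - 1 ∣ g`.

*Normality.* The value of `g_α` at `1` is `Tr α ≠ 0`, so `g_α` is coprime to `X - 1`. If `Φ`
divided `g_α`, which has degree at most `n - 1`, then `g_α` would be a constant multiple of `Φ`;
comparing the two top coefficients gives `α = α ^ q`, a contradiction. Irreducibility of `Φ` over
`F_Q` then gives coprimality of `g_α` with `Φ`, hence with `X^n - 1`.
-/


open Polynomial

/-- An irreducibility criterion for the cyclotomic polynomial of prime index `n`: over a field with
`r` elements, it suffices that `r` has order `n - 1` modulo `n`. -/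
lemma irreducible_cyclotomic_of_card {K : Type*} [Field K] [Fintype K] {p f n : ℕ}
    (hp : p.Prime) (hn : n.Prime) (hne : n ≠ p) (hK : Fintype.card K = p ^ f)
    (ho : orderOf ((p ^ f : ℕ) : ZMod n) = n - 1) : Irreducible (cyclotomic n K) := by
  have : Fact p.Prime := ⟨hp⟩
  have hpn : p.Coprime n := (Nat.coprime_primes hp hn).2 hne.symm
  refine irreducible_of_dvd_cyclotomic_of_natDegree (p := p) (f := f) (n := n)
    (by simpa using hK) hpn dvd_rfl ?_
  rw [natDegree_cyclotomic, Nat.totient_prime hn, ← orderOf_units, ZMod.coe_unitOfCoprime, ho]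

/-- A fixed point of the `q`-Frobenius lies in `F_q`: otherwise `X ^ q - X` would have more than
`q` roots. -/
lemma mem_range_of_pow_card_eq_s11 {K L : Type*} [Field K] [Fintype K] [Field L] [Algebra K L]
    {a : L} (h : a ^ Fintype.card K = a) : a ∈ Set.range (algebraMap K L) := by
  classical
  by_contra ha
  have hcard := card_le_degree_of_subset_roots (R := L) (p := X ^ Fintype.card K - X)
    (Z := insert a (Finset.univ.image (algebraMap K L))) (by
      intro x hx
      rw [mem_roots (FiniteField.X_pow_card_sub_X_ne_zero L Fintype.one_lt_card)]
      have hx' : x = a ∨ ∃ y, algebraMap K L y = x := by simpa using hx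
      rcases hx' with rfl | ⟨y, rfl⟩
      · simp [h]
      · simp [← map_pow, FiniteField.pow_card])
  rw [FiniteField.X_pow_card_sub_X_natDegree_eq L Fintype.one_lt_card,
    Finset.card_insert_of_notMem (by simpa using ha),
    Finset.card_image_of_injective _ (algebraMap K L).injective, Finset.card_univ] at hcard
  omega

/-- `f(φ_q)(α)` is the value at `α` of the polynomial `f` in the `F_q`-linear map `φ_q`. -/
lemma lineval_eq_aeval {K L : Type*} [Field K] [Fintype K] [Field L] [Algebra K L]
    (f : K[X]) (a : L) :
    lineval (Fintype.card K) f a =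
      aeval (FiniteField.frobeniusAlgHom K L).toLinearMap f a := by
  rw [aeval_endomorphism, lineval]
  refine congrArg f.sum (funext₂ fun i c => ?_)
  rw [Algebra.smul_def, Module.End.coe_pow]
  congr 1
  change _ = (fun x : L => x ^ Fintype.card K)^[i] a
  rw [pow_iterate]

/-- The cofactor `b` lies in the ideal generated by `a * b` and `g`. Used with `a * b = X ^ n - 1`,
with `Φ` and `X - 1` as factors in either order. -/
lemma aeval_eq_zero_of_isCoprime {K M : Type*} [Field K] [AddCommGroup M] [Module K M]
    (φ : M →ₗ[K] M) {a b g : K[X]} {v : M} (hab : aeval φ (a * b) v = 0)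
    (hg : aeval φ g v = 0) (h : IsCoprime a g) : aeval φ b v = 0 := by
  obtain ⟨s, t, hst⟩ := h
  have hb : b = s * (a * b) + b * t * g := by linear_combination -b * hst
  rw [hb, map_add, map_mul, map_mul _ (b * t)]
  simp only [LinearMap.add_apply, Module.End.mul_apply, hab, hg, map_zero, add_zero]

theorem stmt_11 (p m n q : ℕ) (hp : p.Prime) (hnp : n.Prime) (hne : n ≠ p)
    (hm : 0 < m) (hq : q = p ^ m)
    {Fq FQ : Type*} [Field Fq] [Fintype Fq] [Field FQ] [Fintype FQ] [Algebra Fq FQ]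
    (hcard : Fintype.card Fq = q) (hcardQ : Fintype.card FQ = q ^ n)
    (horder : orderOf (q : ZMod n) = n - 1)
    (α : FQ) (hα : α ≠ 0)
    (hα2 : α ∉ Set.range (algebraMap Fq FQ))
    (htr : ∑ i ∈ Finset.range n, α ^ q ^ i ≠ 0) :
    IsMinPoly q α (Polynomial.X ^ n - 1 : Polynomial Fq) ∧ IsKNormal q n 0 α := by
  have : Fact n.Prime := ⟨hnp⟩
  have hfix : α ^ q ≠ α := fun h => hα2 (mem_range_of_pow_card_eq_s11 (by rwa [hcard]))
  have hirr : Irreducible (cyclotomic n Fq) :=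
    irreducible_cyclotomic_of_card hp hnp hne (hcard.trans hq) (hq ▸ horder)
  have hirrQ : Irreducible (cyclotomic n FQ) := by
    refine irreducible_cyclotomic_of_card (f := m * n) hp hnp hne
      (by rw [hcardQ, hq, pow_mul]) ?_
    -- Fermat: `q ^ n = q` in `ZMod n`
    rw [pow_mul, ← hq, Nat.cast_pow, ZMod.pow_card, horder]
  constructor
  · have hX : (cyclotomic n Fq) * (X - 1) = X ^ n - 1 := cyclotomic_prime_mul_X_sub_one Fq n
    have hann : lineval q (X ^ n - 1 : Fq[X]) α = 0 := by
      rw [← hcard, lineval_eq_aeval, map_sub, map_pow, aeval_X, map_one, LinearMap.sub_apply,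
        Module.End.coe_pow, Module.End.one_apply]
      change (fun x : FQ => x ^ Fintype.card Fq)^[n] α - α = 0
      rw [pow_iterate, hcard, ← hcardQ]
      exact sub_eq_zero.2 (FiniteField.pow_card α)
    refine ⟨monic_X_pow_sub_C 1 hnp.ne_zero, hann, fun g hg => ?_⟩
    rw [← hcard, lineval_eq_aeval] at hann hg
    have hirr1 : Irreducible (X - 1 : Fq[X]) := by simpa using irreducible_X_sub_C (1 : Fq)
    have h1 : cyclotomic n Fq ∣ g := by
      refine (hirr.isCoprime_or_dvd g).resolve_left fun hc => hfix ?_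
      have := aeval_eq_zero_of_isCoprime _ (b := X - 1) (by rwa [hX]) hg hc
      simpa [sub_eq_zero, hcard] using this
    have h2 : (X - 1 : Fq[X]) ∣ g := by
      refine (hirr1.isCoprime_or_dvd g).resolve_left fun hc => htr ?_
      have h0 := aeval_eq_zero_of_isCoprime _ (b := cyclotomic n Fq)
        (by rwa [mul_comm, hX]) hg hc
      rw [cyclotomic_prime, map_sum, LinearMap.sum_apply] at h0
      rw [← h0]
      refine Finset.sum_congr rfl fun i _ => ?_
      rw [map_pow, aeval_X, Module.End.coe_pow]
      change _ = (fun x : FQ => x ^ Fintype.card Fq)^[i] α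
      rw [pow_iterate, hcard]
    have hcop : IsCoprime (cyclotomic n Fq) (X - 1) := by
      refine ((hirr1.isCoprime_or_dvd _).resolve_right fun hd => ?_).symm
      rw [← C_1, dvd_iff_isRoot, IsRoot, eval_one_cyclotomic_prime] at hd
      have : Fact p.Prime := ⟨hp⟩
      have : CharP Fq p := charP_of_card_eq_prime_pow (hcard.trans hq)
      exact hne ((Nat.prime_dvd_prime_iff_eq hp hnp).1 ((CharP.cast_eq_zero_iff Fq p n).1 hd)).symm
    rw [← hX]
    exact hcop.mul_dvd h1 h2
  · have hX : (cyclotomic n FQ) * (X - 1) = X ^ n - 1 := cyclotomic_prime_mul_X_sub_one FQ n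
    have hcoeff : ∀ j < n, (gpoly q n α).coeff (n - 1 - j) = α ^ q ^ j := by
      intro j hj
      rw [gpoly, finsetSum_coeff, Finset.sum_eq_single j]
      · rw [coeff_C_mul, coeff_X_pow, if_pos rfl, mul_one]
      · intro i hi hij
        rw [coeff_C_mul, coeff_X_pow, if_neg, mul_zero]
        have := Finset.mem_range.1 hi
        omega
      · intro h
        exact absurd (Finset.mem_range.2 hj) h
    have hdeg : (gpoly q n α).natDegree ≤ n - 1 :=
      natDegree_sum_le_of_forall_le _ _ fun i _ =>
        (natDegree_C_mul_X_pow_le _ _).trans (Nat.sub_le _ _)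
    have hc1 : IsCoprime (gpoly q n α) (X - 1) := by
      have hirr1 : Irreducible (X - 1 : FQ[X]) := by simpa using irreducible_X_sub_C (1 : FQ)
      refine ((hirr1.isCoprime_or_dvd _).resolve_right fun hd => htr ?_).symm
      rw [← C_1, dvd_iff_isRoot, IsRoot, gpoly, eval_finsetSum] at hd
      simpa using hd
    have hc2 : IsCoprime (gpoly q n α) (cyclotomic n FQ) := by
      refine ((hirrQ.isCoprime_or_dvd _).resolve_right fun ⟨c, hc⟩ => hfix ?_).symm
      have hn2 := hnp.two_le
      have hg0 : gpoly q n α ≠ 0 := by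
        intro h
        have := hcoeff 0 hnp.pos
        rw [h] at this
        exact hα (by simpa using this.symm)
      have hc0 : c ≠ 0 := fun h => hg0 (by rw [hc, h, mul_zero])
      -- `c` is constant, since `Φ` already has degree `n - 1`
      have hcdeg : c.natDegree = 0 := by
        rw [hc, natDegree_mul (cyclotomic_ne_zero n FQ) hc0, natDegree_cyclotomic,
          Nat.totient_prime hnp] at hdeg
        omega
      obtain ⟨d, rfl⟩ := natDegree_eq_zero.1 hcdeg
      have hconst : ∀ j < n, α ^ q ^ j = d := by
        intro j hj
        have hlt : n - 1 - j < n := by omega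
        rw [← hcoeff j hj, hc, coeff_mul_C, cyclotomic_prime, finsetSum_coeff]
        simp [coeff_X_pow, hlt]
      have h0 := hconst 0 hnp.pos
      have h1 := hconst 1 hnp.one_lt
      rw [pow_one] at h1
      rw [pow_zero, pow_one] at h0
      rw [h0] at h1 ⊢
      exact h1
    have hcop : IsCoprime (gpoly q n α) (X ^ n - 1) := hX ▸ hc2.mul_right hc1
    unfold IsKNormal
    let := Classical.decEq (Polynomial FQ)
    exact natDegree_eq_zero_of_isUnit (EuclideanDomain.gcd_isUnit_iff.2 hcop)
end

section
/- Let p and n be prime numbers with n ≠ p, q = p^m, Q = q^n, and suppose that the multiplicative order of q modulo n is n − 1. If α ∈ F_q^×, then Tr(α) = n·α ≠ 0, the conventional minimal polynomial of α is m_α(X) = X − 1 (equivalently, the minimal q-polynomial of α is x^q − x), and α is (n−1)-normal for F_Q/F_q. -/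
/-!
An element `α` of `F_q^×` is fixed by `x ↦ x^q`, so every conjugate `α^(q^i)` equals `α`, and:

* the trace is `n α`, nonzero because `n` is a prime different from the characteristic `p`;
* `f(φ_q)(α) = f(1) α`, so the annihilating ideal consists of the `f` with `f(1) = 0`, which is
  `(X - 1)`;
* `g_α = α (1 + X + ⋯ + X^(n-1))`, which divides `X^n - 1` and has degree `n - 1`.
-/

open Polynomial

/-- On an element fixed by every `x ↦ x^(q^i)` the linearized polynomial of `f` acts as multiplication by `f(1)`. -/
lemma lineval_of_fixed {Fq FQ : Type*} [Field Fq] [Field FQ] [Algebra Fq FQ]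
    (q : ℕ) (f : Polynomial Fq) (α : FQ) (h : ∀ i, α ^ q ^ i = α) :
    lineval q f α = algebraMap Fq FQ (f.eval 1) * α := by
  simp only [lineval, h, eval_eq_sum, one_pow, mul_one, Polynomial.sum, map_sum, Finset.sum_mul]

lemma gpoly_of_fixed {FQ : Type*} [Field FQ] (q n : ℕ) (α : FQ) (h : ∀ i, α ^ q ^ i = α) :
    gpoly q n α = C α * ∑ i ∈ Finset.range n, (X : Polynomial FQ) ^ i := by
  simp only [gpoly, h, ← Finset.mul_sum]
  rw [Finset.sum_range_reflect (fun i => (X : Polynomial FQ) ^ i) n]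

lemma natDegree_geom_sum {F : Type*} [Field F] {n : ℕ} (hn : n ≠ 0) :
    (∑ i ∈ Finset.range n, (X : Polynomial F) ^ i).natDegree = n - 1 := by
  have hne : (∑ i ∈ Finset.range n, (X : Polynomial F) ^ i) ≠ 0 :=
    (Polynomial.monic_geom_sum_X hn).ne_zero
  have h := congrArg natDegree (geom_sum_mul (X : Polynomial F) n)
  rw [← C_1, natDegree_mul hne (X_sub_C_ne_zero 1), natDegree_X_sub_C, natDegree_X_pow_sub_C] at h
  omega

/-- Here `g_α` divides `X^n - 1`, so the gcd is `g_α` up to a unit. -/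
lemma isKNormal_of_fixed {FQ : Type*} [Field FQ] (q n : ℕ) (hn : n ≠ 0) (α : FQ) (hα : α ≠ 0)
    (h : ∀ i, α ^ q ^ i = α) : IsKNormal q n (n - 1) α := by
  have hdvd : gpoly q n α ∣ X ^ n - 1 := by
    rw [gpoly_of_fixed q n α h, (isUnit_C.mpr hα.isUnit).mul_left_dvd]
    exact ⟨X - 1, (geom_sum_mul _ _).symm⟩
  -- The gcd in `IsKNormal` is built on this instance.
  let := Classical.decEq (Polynomial FQ)
  unfold IsKNormal
  refine (natDegree_eq_of_degree_eq (degree_eq_degree_of_associated (associated_of_dvd_dvd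
    (EuclideanDomain.gcd_dvd_left _ _) (EuclideanDomain.dvd_gcd dvd_rfl hdvd)))).trans ?_
  rw [gpoly_of_fixed q n α h, natDegree_C_mul hα, natDegree_geom_sum hn]

theorem stmt_13 (p m n q : ℕ) (hp : p.Prime) (hnp : n.Prime) (hne : n ≠ p)
    (hm : 0 < m) (hq : q = p ^ m)
    {Fq FQ : Type*} [Field Fq] [Fintype Fq] [Field FQ] [Fintype FQ] [Algebra Fq FQ]
    (hcard : Fintype.card Fq = q) (hcardQ : Fintype.card FQ = q ^ n)
    (horder : orderOf (q : ZMod n) = n - 1)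
    (α : FQ) (a : Fq) (ha : a ≠ 0) (hαa : α = algebraMap Fq FQ a) :
    (∑ i ∈ Finset.range n, α ^ q ^ i = (n : FQ) * α) ∧
    (∑ i ∈ Finset.range n, α ^ q ^ i ≠ 0) ∧
    IsMinPoly q α (Polynomial.X - 1 : Polynomial Fq) ∧
    IsKNormal q n (n - 1) α := by
  subst hαa
  have hα : algebraMap Fq FQ a ≠ 0 := by simpa using ha
  have h : ∀ i, (algebraMap Fq FQ a) ^ q ^ i = algebraMap Fq FQ a := fun i => by
    rw [← map_pow, ← hcard, FiniteField.pow_card_pow]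
  have htr : ∑ i ∈ Finset.range n, (algebraMap Fq FQ a) ^ q ^ i = (n : FQ) * algebraMap Fq FQ a := by
    simp [h]
  have hpQ : (p : FQ) = 0 := by
    have h0 : (q : FQ) ^ n = 0 := by
      exact_mod_cast hcardQ ▸ FiniteField.cast_card_eq_zero FQ
    have h1 : (q : FQ) = 0 := eq_zero_of_pow_eq_zero h0
    rw [hq, Nat.cast_pow] at h1
    exact eq_zero_of_pow_eq_zero h1
  have hnQ : (n : FQ) ≠ 0 := by
    intro hn0
    -- Bézout: two distinct primes cannot both vanish in a field.
    have hco : IsCoprime (n : ℤ) (p : ℤ) :=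
      Nat.isCoprime_iff_coprime.mpr ((Nat.coprime_primes hnp hp).mpr hne)
    obtain ⟨u, v, huv⟩ := hco
    have := congrArg (Int.cast : ℤ → FQ) huv
    simp [hn0, hpQ] at this
  refine ⟨htr, htr ▸ mul_ne_zero hnQ hα, ⟨?_, ?_, fun g hg => ?_⟩,
    isKNormal_of_fixed q n hnp.ne_zero _ hα h⟩
  · simpa using monic_X_sub_C (1 : Fq)
  · rw [lineval_of_fixed q _ _ h]
    simp
  · rw [lineval_of_fixed q _ _ h] at hg
    rw [← C_1, dvd_iff_isRoot, IsRoot]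
    simpa [ha] using hg
end

section
/- Let p and n be distinct primes with n ≥ 3 odd, q = p^m with q odd, Q = q^n, and suppose that the multiplicative order of q modulo n is (n−1)/2. For r ∈ (Z/nZ)^× let χ(r) ∈ {1, −1} ⊆ F_q denote the Legendre symbol (r/n) regarded in F_q, let n* = (−1)^{(n−1)/2}·n regarded in F_q, and let s ∈ F_q satisfy s² = n*. For α ∈ F_Q^× with α ∉ F_q and Tr(α) = 0, set δ = Σ_{r=1}^{n−1} χ(r) α^{q^r}. If s·δ ∉ {n·α, −n·α}, then α is 1-normal for F_Q/F_q with conventional minimal polynomial m_α(X) = X^{n−1} + ⋯ + X + 1; otherwise α is ((n+1)/2)-normal for F_Q/F_q and m_α is a monic irreducible polynomial of degree (n−1)/2 dividing X^n − 1 in F_q[X]. -/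
/-!
Let `K` be an algebraic closure of `F_Q` and `ζ ∈ K` a primitive `n`-th root of unity. Everything is
read off from the set `W` of those `b ∈ ℤ/n` with `g_α(ζ ^ b) ≠ 0`.

* Modulo `X ^ n - 1`, passing from `α` to `f(φ_q)(α)` multiplies `g_α` by `f` (`gEval_lineval`).
  Since `g_β` has degree less than `n` and determines `β`, this shows that `f(φ_q)(α) = 0` iff `f`
  vanishes at `ζ ^ b` for all `b ∈ W` (`lineval_eq_zero_iff`).
* `X ^ n - 1` is separable and split over `K`, so `α` is `k`-normal iff the complement of `W` has
  `k` elements (`isKNormal_iff`).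
* `W` is stable under multiplication by `q` (`gEval_pow_card_eq_zero_iff`). As `q` has order
  `(n - 1) / 2`, the orbits of nonzero classes are the squares and the nonsquares
  (`exists_mul_pow_eq`). Moreover `0 ∉ W` as `Tr(α) = 0`, and `W` is nonempty as `α ≠ 0`. Hence `W` is
  the set of all nonzero classes, of squares, or of nonsquares.
* For `b ≠ 0` the polynomial `D = ∑ χ(r) X ^ r` takes the value `χ(b) G` at `ζ ^ b`, where `G` is the
  quadratic Gauss sum and `G ^ 2 = n*` (`sum_legendreSym_mul_pow`, `gaussSum_qchar_sq`). Hence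
  `(s G) ^ 2 = n ^ 2`, and `s δ = ε n α` iff `χ(b) s G = ε n` for all `b ∈ W`. This holds for some
  sign `ε` iff `χ` is constant on `W`.

If `W` consists of all nonzero classes, the minimal polynomial of `α` is `1 + X + ⋯ + X ^ (n - 1)`.
Otherwise `W` is a single Frobenius orbit, and it is the ordinary minimal polynomial over `F_q` of
`ζ ^ c` for any `c ∈ W`, an irreducible factor of the `n`-th cyclotomic polynomial.
-/

open Polynomial

/-! ### Values of `g_β` at the roots of unity -/

section Eval

variable {Fq FQ : Type*} [Field Fq] [Fintype Fq] [Field FQ] [Algebra Fq FQ]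

lemma frob_pow_apply (i : ℕ) (β : FQ) :
    ((FiniteField.frobeniusAlgHom Fq FQ).toLinearMap ^ i) β = β ^ Fintype.card Fq ^ i := by
  induction i with
  | zero => simp
  | succ i ih => rw [pow_succ', Module.End.mul_apply, ih]; simp [pow_succ, pow_mul]

lemma aeval_pow_card_pow (f : Fq[X]) (x : FQ) (i : ℕ) :
    aeval (x ^ Fintype.card Fq ^ i) f = aeval x f ^ Fintype.card Fq ^ i := by
  induction i with
  | zero => simp
  | succ i ih =>
    rw [pow_succ, pow_mul, pow_mul, ← ih, ← FiniteField.frobeniusAlgHom_apply Fq FQ,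
      ← FiniteField.frobeniusAlgHom_apply Fq FQ, aeval_algHom_apply]

/-- The action `f ↦ f(φ_q)` is evaluation of `f` at the Frobenius endomorphism, so it is
multiplicative in `f`. -/
lemma lineval_eq_aeval_s14 (f : Fq[X]) (β : FQ) :
    lineval (Fintype.card Fq) f β =
      aeval (FiniteField.frobeniusAlgHom Fq FQ).toLinearMap f β := by
  rw [aeval_endomorphism, lineval]
  simp only [frob_pow_apply, Algebra.smul_def]

variable {K : Type*} [Field K] [Algebra FQ K] [Algebra Fq K] [IsScalarTower Fq FQ K]

/-- The `F_q`-linear map `β ↦ g_β(x)`, for a fixed point `x` of an extension `K` of `F_Q`. -/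
noncomputable def gEval (Fq FQ : Type*) [Field Fq] [Fintype Fq] [Field FQ] [Algebra Fq FQ]
    {K : Type*} [Field K] [Algebra FQ K] [Algebra Fq K] [IsScalarTower Fq FQ K]
    (n : ℕ) (x : K) : FQ →ₗ[Fq] K :=
  ∑ i ∈ Finset.range n, x ^ (n - 1 - i) • ((IsScalarTower.toAlgHom Fq FQ K).toLinearMap ∘ₗ
    (FiniteField.frobeniusAlgHom Fq FQ).toLinearMap ^ i)

lemma gEval_apply (n : ℕ) (x : K) (β : FQ) :
    gEval Fq FQ n x β =
      ∑ i ∈ Finset.range n, algebraMap FQ K β ^ Fintype.card Fq ^ i * x ^ (n - 1 - i) := by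
  simp [gEval, frob_pow_apply, mul_comm]

lemma aeval_gpoly (n : ℕ) (x : K) (β : FQ) :
    aeval x (gpoly (Fintype.card Fq) n β) = gEval Fq FQ n x β := by
  simp [gEval_apply, gpoly]

/-- Modulo `X ^ n - 1`, applying Frobenius to `β` multiplies `g_β` by `X`: the coefficients shift by
one place, and the last one wraps around because `φ_q ^ n = 1` on `F_Q`. -/
lemma gEval_frob {n : ℕ} (hn : 0 < n) {x : K} (hx : x ^ n = 1) {β : FQ}
    (hβ : β ^ Fintype.card Fq ^ n = β) :
    gEval Fq FQ n x (β ^ Fintype.card Fq) = x * gEval Fq FQ n x β := by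
  obtain ⟨k, rfl⟩ : ∃ k, n = k + 1 := ⟨n - 1, by omega⟩
  have hβ' := congrArg (algebraMap FQ K) hβ
  rw [gEval_apply, gEval_apply, Finset.sum_range_succ, Finset.sum_range_succ', mul_add,
    Finset.mul_sum]
  simp only [map_pow, ← pow_mul, ← pow_succ'] at hβ' ⊢
  congr 1
  · refine Finset.sum_congr rfl fun i hi => ?_
    have : k + 1 - 1 - i = k + 1 - 1 - (i + 1) + 1 := by
      have := Finset.mem_range.1 hi
      omega
    rw [this]; ring
  · simp only [hβ']
    simp only [add_tsub_cancel_right, tsub_self, pow_zero, tsub_zero, pow_one, mul_one]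
    rw [mul_left_comm, ← pow_succ', hx, mul_one]

/-- Applying `f(φ_q)` to `β` multiplies `g_β` by `f` modulo `X ^ n - 1`. -/
lemma gEval_lineval {n : ℕ} (hn : 0 < n) {x : K} (hx : x ^ n = 1)
    (hF : ∀ β : FQ, β ^ Fintype.card Fq ^ n = β) (f : Fq[X]) (β : FQ) :
    gEval Fq FQ n x (lineval (Fintype.card Fq) f β) = aeval x f * gEval Fq FQ n x β := by
  rw [lineval_eq_aeval_s14]
  induction f using Polynomial.induction_on' with
  | add f g hf hg => simp only [map_add, LinearMap.add_apply, hf, hg, add_mul]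
  | monomial i a =>
    induction i with
    | zero =>
      rw [monomial_zero_left, aeval_C, aeval_C, Module.algebraMap_end_apply, map_smul,
        Algebra.smul_def]
    | succ i ih =>
      have : monomial (i + 1) a = X * monomial i a := by rw [X_mul_monomial]
      rw [this, map_mul, Module.End.mul_apply, aeval_X, AlgHom.toLinearMap_apply,
        FiniteField.frobeniusAlgHom_apply, gEval_frob hn hx (hF _), ih, map_mul, aeval_X, mul_assoc]

/-- The zero set of `g_β` on the `n`-th roots of unity is stable under `x ↦ x ^ q`. -/
lemma gEval_pow_card_eq_zero_iff {n : ℕ} (hn : 0 < n) {x : K} (hx : x ^ n = 1)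
    (hF : ∀ β : FQ, β ^ Fintype.card Fq ^ n = β) (β : FQ) :
    gEval Fq FQ n (x ^ Fintype.card Fq) β = 0 ↔ gEval Fq FQ n x β = 0 := by
  have hx0 : x ≠ 0 := by rintro rfl; simp [hn.ne'] at hx
  -- Frobenius sends `g_β(x)` to `g_{φ_q(β)}(x ^ q)`, which is `x ^ q * g_β(x ^ q)`
  have h : (gEval Fq FQ n x β) ^ Fintype.card Fq
      = x ^ Fintype.card Fq * gEval Fq FQ n (x ^ Fintype.card Fq) β := by
    rw [← gEval_frob hn (by rw [← pow_mul, mul_comm, pow_mul, hx, one_pow]) (hF β), gEval_apply,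
      ← FiniteField.frobeniusAlgHom_apply Fq K, map_sum, gEval_apply]
    refine Finset.sum_congr rfl fun i _ => ?_
    simp only [map_mul, map_pow, FiniteField.frobeniusAlgHom_apply]
  have hq : Fintype.card Fq ≠ 0 := Fintype.card_ne_zero
  rw [← pow_eq_zero_iff (a := gEval Fq FQ n x β) hq, h]
  simp [hx0]

variable {n : ℕ} [NeZero n] {ζ : K}

lemma zmodChar_natCast_mul (hζ : IsPrimitiveRoot ζ n) (k : ℕ) (b : ZMod n) :
    AddChar.zmodChar n hζ.pow_eq_one (k * b) = AddChar.zmodChar n hζ.pow_eq_one b ^ k := by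
  rw [← nsmul_eq_mul, AddChar.map_nsmul_eq_pow]

lemma zmodChar_pow (hζ : IsPrimitiveRoot ζ n) (b : ZMod n) :
    AddChar.zmodChar n hζ.pow_eq_one b ^ n = 1 := by
  rw [← zmodChar_natCast_mul hζ]; simp

lemma zmodChar_injective (hζ : IsPrimitiveRoot ζ n) :
    Function.Injective (AddChar.zmodChar n hζ.pow_eq_one) := by
  intro a b h
  rw [AddChar.zmodChar_apply, AddChar.zmodChar_apply] at h
  exact ZMod.val_injective n (hζ.pow_inj a.val_lt b.val_lt h)

lemma exists_zmodChar_eq (hζ : IsPrimitiveRoot ζ n) {x : K} (hx : x ^ n = 1) :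
    ∃ b, AddChar.zmodChar n hζ.pow_eq_one b = x := by
  obtain ⟨i, hi, rfl⟩ := hζ.eq_pow_of_pow_eq_one hx
  exact ⟨i, by rw [AddChar.zmodChar_apply, ZMod.val_cast_of_lt hi]⟩

/-- An element `β` is determined by the values of `g_β` on the `n`-th roots of unity, because
`deg g_β < n` and `β` is the coefficient of `X ^ (n - 1)`. -/
lemma eq_zero_of_gEval_eq_zero (hζ : IsPrimitiveRoot ζ n) {β : FQ}
    (h : ∀ b, gEval Fq FQ n (AddChar.zmodChar n hζ.pow_eq_one b) β = 0) : β = 0 := by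
  have hn : 0 < n := Nat.pos_of_ne_zero (NeZero.ne n)
  have hdeg : (gpoly (Fintype.card Fq) n β).natDegree ≤ n - 1 :=
    natDegree_sum_le_of_forall_le _ _ fun i _ =>
      (natDegree_C_mul_X_pow_le _ _).trans (Nat.sub_le _ _)
  have h0 : (gpoly (Fintype.card Fq) n β).map (algebraMap FQ K) = 0 := by
    refine eq_zero_of_natDegree_lt_card_of_eval_eq_zero _ (zmodChar_injective hζ) (fun b => ?_) ?_
    · rw [eval_map_algebraMap, aeval_gpoly, h]
    · rw [natDegree_map, ZMod.card]; omega
  rw [Polynomial.map_eq_zero] at h0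
  have hc := congrArg (fun P => coeff P (n - 1)) h0
  simp only [gpoly, finsetSum_coeff, coeff_C_mul, coeff_X_pow, coeff_zero] at hc
  rw [Finset.sum_eq_single_of_mem 0 (Finset.mem_range.2 hn)] at hc
  · simpa using hc
  · intro i hi hi0
    have := Finset.mem_range.1 hi
    rw [if_neg (by omega), mul_zero]

/-- `f(φ_q)` kills `α` iff `f` vanishes at the `n`-th roots of unity where `g_α` does not. -/
lemma lineval_eq_zero_iff (hζ : IsPrimitiveRoot ζ n)
    (hF : ∀ β : FQ, β ^ Fintype.card Fq ^ n = β) (f : Fq[X]) (α : FQ) :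
    lineval (Fintype.card Fq) f α = 0 ↔
      ∀ b, gEval Fq FQ n (AddChar.zmodChar n hζ.pow_eq_one b) α ≠ 0 →
        aeval (AddChar.zmodChar n hζ.pow_eq_one b) f = 0 := by
  have hn : 0 < n := Nat.pos_of_ne_zero (NeZero.ne n)
  have key := fun b => gEval_lineval hn (zmodChar_pow hζ b) hF f α
  constructor
  · intro h b hb
    have := key b
    rw [h, map_zero] at this
    exact (mul_eq_zero.1 this.symm).resolve_right hb
  · intro h
    refine eq_zero_of_gEval_eq_zero (Fq := Fq) hζ fun b => ?_
    rw [key]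
    by_cases hb : gEval Fq FQ n (AddChar.zmodChar n hζ.pow_eq_one b) α = 0
    · rw [hb, mul_zero]
    · rw [h b hb, zero_mul]

omit [Fintype Fq] in
lemma X_pow_sub_one_dvd (hζ : IsPrimitiveRoot ζ n) {f : Fq[X]}
    (h : ∀ b, aeval (AddChar.zmodChar n hζ.pow_eq_one b) f = 0) : X ^ n - 1 ∣ f := by
  have hn : 0 < n := Nat.pos_of_ne_zero (NeZero.ne n)
  rw [← map_dvd_map' (algebraMap Fq K), Polynomial.map_sub, Polynomial.map_pow, map_X,
    Polynomial.map_one, X_pow_sub_one_eq_prod hn hζ]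
  refine Finset.prod_dvd_of_coprime ?_ fun x hx => ?_
  · exact (pairwise_coprime_X_sub_C Function.injective_id).set_pairwise _
  · obtain ⟨b, rfl⟩ := exists_zmodChar_eq hζ ((mem_nthRootsFinset hn _).1 hx)
    rw [dvd_iff_isRoot, IsRoot, eval_map_algebraMap, h]

/-- Since `X ^ n - 1` is split and separable over `K`, the degree of a gcd with it counts common
roots. -/
lemma isKNormal_iff (hζ : IsPrimitiveRoot ζ n) (k : ℕ) (α : FQ) :
    IsKNormal (Fintype.card Fq) n k α ↔
      {b | gEval Fq FQ n (AddChar.zmodChar n hζ.pow_eq_one b) α = 0}.ncard = k := by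
  let : DecidableEq FQ[X] := Classical.decEq _
  let : DecidableEq K := Classical.decEq _
  have hn : 0 < n := Nat.pos_of_ne_zero (NeZero.ne n)
  change (EuclideanDomain.gcd (gpoly (Fintype.card Fq) n α) (X ^ n - 1)).natDegree = k ↔ _
  generalize hd : EuclideanDomain.gcd (gpoly (Fintype.card Fq) n α) (X ^ n - 1) = d
  have hdg : d ∣ gpoly (Fintype.card Fq) n α := hd ▸ EuclideanDomain.gcd_dvd_left _ _
  have hdX : d ∣ X ^ n - 1 := hd ▸ EuclideanDomain.gcd_dvd_right _ _
  have hP0 : (X ^ n - 1 : K[X]) ≠ 0 := X_pow_sub_C_ne_zero hn 1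
  have hPs : (X ^ n - 1 : K[X]).Splits := X_pow_sub_one_splits hζ
  have hmX : d.map (algebraMap FQ K) ∣ X ^ n - 1 := by
    simpa using Polynomial.map_dvd (algebraMap FQ K) hdX
  have hnod : (d.map (algebraMap FQ K)).roots.Nodup :=
    Multiset.nodup_of_le (roots.le_of_dvd hP0 hmX) 
      (nodup_roots (X_pow_sub_one_separable_iff.2 hζ.neZero'.out))
  have hm0 : d.map (algebraMap FQ K) ≠ 0 := ne_zero_of_dvd_ne_zero hP0 hmX
  have hcard : d.natDegree = (d.map (algebraMap FQ K)).roots.toFinset.card := by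
    rw [Multiset.toFinset_card_of_nodup hnod, ← (hPs.of_dvd hP0 hmX).natDegree_eq_card_roots,
      natDegree_map]
  have himg : AddChar.zmodChar n hζ.pow_eq_one ''
      {b | gEval Fq FQ n (AddChar.zmodChar n hζ.pow_eq_one b) α = 0} =
      (d.map (algebraMap FQ K)).roots.toFinset := by
    ext x
    simp only [Set.mem_image, Set.mem_ofPred_eq, Finset.mem_coe, Multiset.mem_toFinset,
      mem_roots hm0, IsRoot, eval_map_algebraMap]
    constructor
    · rintro ⟨b, hb, rfl⟩
      -- Bézout: the gcd is a combination of the two polynomials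
      rw [← hd, EuclideanDomain.gcd_eq_gcd_ab]
      simp [aeval_gpoly, hb, zmodChar_pow hζ b]
    · intro hx
      have h1 := aeval_eq_zero_of_dvd_aeval_eq_zero hdg hx
      have h2 := aeval_eq_zero_of_dvd_aeval_eq_zero hdX hx
      rw [aeval_gpoly] at h1
      simp only [map_sub, map_pow, aeval_X, map_one, sub_eq_zero] at h2
      obtain ⟨b, rfl⟩ := exists_zmodChar_eq hζ h2
      exact ⟨b, h1, rfl⟩
  rw [hcard, ← Set.ncard_coe_finset, ← himg, Set.ncard_image_of_injective _ (zmodChar_injective hζ)]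

end Eval

/-! ### Quadratic residues and Gauss sums -/

section Residues

variable {n : ℕ} [hnp : Fact n.Prime]

/-- When `q` has order `(n - 1) / 2` modulo `n`, its powers are all the nonzero squares, so two
units with the same quadratic character differ by a power of `q`. -/
lemma exists_mul_pow_eq (hnodd : Odd n) {q : ZMod n} (hq : orderOf q = (n - 1) / 2)
    (hn3 : 3 ≤ n) {b c : ZMod n} (hc : c ≠ 0)
    (h : quadraticChar (ZMod n) b = quadraticChar (ZMod n) c) :
    ∃ i < (n - 1) / 2, b = q ^ i * c := by
  have hd : n / 2 = (n - 1) / 2 := by obtain ⟨k, rfl⟩ := hnodd; omega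
  have : NeZero ((n - 1) / 2) := ⟨by omega⟩
  have hb : b ≠ 0 := by
    rintro rfl
    rw [quadraticChar_zero, eq_comm, quadraticChar_eq_zero_iff] at h
    exact hc h
  have hprim : IsPrimitiveRoot q ((n - 1) / 2) := hq ▸ IsPrimitiveRoot.orderOf q
  have h1 : quadraticChar (ZMod n) (b / c) = 1 := by
    have h2 : quadraticChar (ZMod n) (b / c) * quadraticChar (ZMod n) c
        = quadraticChar (ZMod n) c := by
      rw [← map_mul, div_mul_cancel₀ _ hc, h]
    exact mul_right_cancel₀ (mt quadraticChar_eq_zero_iff.1 hc) (h2.trans (one_mul _).symm)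
  have hbc : b / c ≠ 0 := div_ne_zero hb hc
  have h3 := (ZMod.euler_criterion n hbc).1 ((quadraticChar_one_iff_isSquare hbc).1 h1)
  obtain ⟨i, hi, h4⟩ := hprim.eq_pow_of_pow_eq_one (hd ▸ h3)
  exact ⟨i, hi, by rw [h4, div_mul_cancel₀ _ hc]⟩

variable {K : Type*} [Field K] {ζ : K}

/-- The quadratic character modulo `n`, with values in `K`. -/
noncomputable def qchar (n : ℕ) [Fact n.Prime] (K : Type*) [Field K] : MulChar (ZMod n) K :=
  (quadraticChar (ZMod n)).ringHomComp (Int.castRingHom K)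

lemma qchar_apply (a : ZMod n) : qchar n K a = ((quadraticChar (ZMod n) a : ℤ) : K) := rfl

lemma gaussSum_qchar_sq (hnodd : Odd n) (h2 : (2 : K) ≠ 0) (hζ : IsPrimitiveRoot ζ n) :
    gaussSum (qchar n K) (AddChar.zmodChar n hζ.pow_eq_one) ^ 2 =
      (-1) ^ ((n - 1) / 2) * (n : K) := by
  have hn2 : ringChar (ZMod n) ≠ 2 := by
    rw [ZMod.ringChar_zmod_n]; rintro rfl; exact absurd hnodd (by decide)
  have hne : qchar n K ≠ 1 := by
    obtain ⟨a, ha⟩ := quadraticChar_exists_neg_one hn2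
    intro h
    have ha0 : a ≠ 0 := by rintro rfl; simp at ha
    have h1 : qchar n K a = 1 := by rw [h, MulChar.one_apply ha0.isUnit]
    rw [qchar_apply, ha] at h1
    apply h2
    push_cast at h1
    linear_combination -h1
  rw [gaussSum_sq hne ((quadraticChar_isQuadratic _).comp _)
    (AddChar.zmodChar_primitive_of_primitive_root n hζ), ZMod.card, qchar_apply,
    quadraticChar_neg_one hn2, ZMod.card, ZMod.χ₄_eq_neg_one_pow (Nat.odd_iff.1 hnodd)]
  have hd : n / 2 = (n - 1) / 2 := by obtain ⟨k, rfl⟩ := hnodd; omega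
  rw [hd]; push_cast; rfl

/-- The value of `∑ χ(r) X ^ r` at `ζ ^ b` is a shifted Gauss sum. -/
lemma sum_legendreSym_mul_pow (hζ : IsPrimitiveRoot ζ n) {b : ZMod n} (hb : b ≠ 0) :
    ∑ r ∈ Finset.Icc 1 (n - 1),
      ((legendreSym n r : ℤ) : K) * AddChar.zmodChar n hζ.pow_eq_one b ^ r =
    qchar n K b * gaussSum (qchar n K) (AddChar.zmodChar n hζ.pow_eq_one) := by
  have hn1 : 1 < n := hnp.out.one_lt
  have hsq : qchar n K b * qchar n K b = 1 := by
    rw [qchar_apply, ← Int.cast_mul, ← sq, quadraticChar_sq_one hb, Int.cast_one]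
  have hsh := gaussSum_mulShift (qchar n K) (AddChar.zmodChar n hζ.pow_eq_one) (Units.mk0 b hb)
  rw [Units.val_mk0] at hsh
  rw [← hsh, ← mul_assoc, hsq, one_mul, gaussSum]
  rw [← Finset.sum_subset (Finset.subset_univ (Finset.univ.erase (0 : ZMod n)))]
  · refine Finset.sum_nbij' (fun r => (r : ZMod n)) ZMod.val ?_ ?_ ?_ ?_ ?_
    · intro r hr
      obtain ⟨h1, h2⟩ := Finset.mem_Icc.1 hr
      refine Finset.mem_erase.2 ⟨fun h => ?_, Finset.mem_univ _⟩
      have := Nat.le_of_dvd (by omega) ((ZMod.natCast_eq_zero_iff r n).1 h)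
      omega
    · intro a ha
      have h1 := ZMod.val_lt a
      have h2 : a.val ≠ 0 := by simpa using ha
      exact Finset.mem_Icc.2 ⟨by omega, by omega⟩
    · intro r hr
      obtain ⟨h1, h2⟩ := Finset.mem_Icc.1 hr
      exact ZMod.val_cast_of_lt (by omega)
    · intro a _
      exact ZMod.natCast_zmod_val a
    · intro r _
      rw [AddChar.mulShift_apply, mul_comm b, zmodChar_natCast_mul hζ, qchar_apply, legendreSym,
        Int.cast_natCast]
  · intro a _ ha
    obtain rfl : a = 0 := by simpa using ha
    rw [MulChar.map_zero, zero_mul]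

end Residues

/-! ### The structure of the set of zeros of `g_α` -/

theorem stmt_14 (p m n q : ℕ) (hp : p.Prime) [hnp : Fact n.Prime] (hne : n ≠ p)
    (hn3 : 3 ≤ n) (hnodd : Odd n) (hm : 0 < m) (hq : q = p ^ m) (hqodd : Odd q)
    {Fq FQ : Type*} [Field Fq] [Fintype Fq] [Field FQ] [Fintype FQ] [Algebra Fq FQ]
    (hcard : Fintype.card Fq = q) (hcardQ : Fintype.card FQ = q ^ n)
    (horder : orderOf (q : ZMod n) = (n - 1) / 2)
    -- s is a square root in F_q of n* = (-1)^((n-1)/2)·n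
    (s : Fq) (hs : s ^ 2 = (-1 : Fq) ^ ((n - 1) / 2) * (n : Fq))
    (α : FQ) (hα : α ≠ 0)
    (hα2 : α ∉ Set.range (algebraMap Fq FQ))
    (htr : ∑ i ∈ Finset.range n, α ^ q ^ i = 0) :
    let δ : FQ := ∑ r ∈ Finset.Icc 1 (n - 1),
      algebraMap Fq FQ ((legendreSym n r : ℤ) : Fq) * α ^ q ^ r
    ((algebraMap Fq FQ s * δ ≠ (n : FQ) * α ∧ algebraMap Fq FQ s * δ ≠ -((n : FQ) * α)) →
      IsKNormal q n 1 α ∧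
        IsMinPoly q α (∑ i ∈ Finset.range n, Polynomial.X ^ i : Polynomial Fq)) ∧
    ((algebraMap Fq FQ s * δ = (n : FQ) * α ∨ algebraMap Fq FQ s * δ = -((n : FQ) * α)) →
      IsKNormal q n ((n + 1) / 2) α ∧
        ∃ m₂ : Polynomial Fq, m₂.Monic ∧ Irreducible m₂ ∧ m₂.natDegree = (n - 1) / 2 ∧
          m₂ ∣ (Polynomial.X ^ n - 1) ∧ IsMinPoly q α m₂) := by
  subst hcard
  intro δ
  set K := AlgebraicClosure FQ
  have := Fact.mk hp
  have : CharP Fq p := charP_of_card_eq_prime_pow hq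
  have : CharP K p := charP_of_injective_algebraMap (algebraMap Fq K).injective p
  have hn0 : 0 < n := by omega
  have hnK : (n : K) ≠ 0 := by
    rw [Ne, CharP.cast_eq_zero_iff K p, Nat.prime_dvd_prime_iff_eq hp hnp.out]
    exact hne.symm
  have h2K : (2 : K) ≠ 0 := by
    intro h
    have h' : p ∣ 2 := (CharP.cast_eq_zero_iff K p 2).1 (by exact_mod_cast h)
    obtain rfl := (Nat.prime_dvd_prime_iff_eq hp Nat.prime_two).1 h'
    rw [hq, Nat.odd_pow_iff hm.ne'] at hqodd
    exact absurd hqodd (by decide)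
  have : NeZero (n : K) := ⟨hnK⟩
  obtain ⟨ζ, hζ⟩ := HasEnoughRootsOfUnity.exists_primitiveRoot K n
  have hF : ∀ β : FQ, β ^ Fintype.card Fq ^ n = β := fun β => by
    rw [← hcardQ, FiniteField.pow_card]
  set e := AddChar.zmodChar n hζ.pow_eq_one with he
  -- the indices of the roots of unity at which `g_α` does not vanish
  set W : Set (ZMod n) := {b | gEval Fq FQ n (e b) α ≠ 0} with hW
  have hlin : ∀ f : Fq[X], lineval (Fintype.card Fq) f α = 0 ↔ ∀ b ∈ W, aeval (e b) f = 0 :=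
    fun f => lineval_eq_zero_iff hζ hF f α
  have hker : ∀ k, IsKNormal (Fintype.card Fq) n k α ↔ Wᶜ.ncard = k := fun k => by
    rw [isKNormal_iff hζ]
    simp [hW, Set.compl_def, he]
  -- `1` does not annihilate `α`
  have hWne : W.Nonempty := by
    by_contra h
    rw [Set.not_nonempty_iff_eq_empty] at h
    have h1 := (hlin 1).2 (by simp [h])
    rw [lineval_eq_aeval_s14, map_one, Module.End.one_apply] at h1
    exact hα h1
  -- `g_α(1)` is the trace of `α`
  have hW0 : (0 : ZMod n) ∉ W := by
    have h := congrArg (algebraMap FQ K) htr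
    rw [map_sum, map_zero] at h
    simpa [hW, gEval_apply] using h
  have hWq : ∀ b, (Fintype.card Fq : ZMod n) * b ∈ W ↔ b ∈ W := fun b => by
    simp only [hW, Set.mem_ofPred_eq]
    rw [he, zmodChar_natCast_mul hζ]
    exact (gEval_pow_card_eq_zero_iff hn0 (zmodChar_pow hζ b) hF α).not
  have hWpow : ∀ i b, (Fintype.card Fq : ZMod n) ^ i * b ∈ W ↔ b ∈ W := fun i b => by
    induction i with
    | zero => simp
    | succ i ih => rw [pow_succ', mul_assoc, hWq, ih]
  have horb : ∀ b c, c ∈ W → quadraticChar (ZMod n) b = quadraticChar (ZMod n) c →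
      ∃ i < (n - 1) / 2, b = (Fintype.card Fq : ZMod n) ^ i * c := fun b c hc h =>
    exists_mul_pow_eq hnodd horder hn3 (fun h0 => hW0 (h0 ▸ hc)) h
  set S : K := algebraMap Fq K s * gaussSum (qchar n K) e with hS
  have hS2 : S ^ 2 = (n : K) ^ 2 := by
    have h1 := congrArg (algebraMap Fq K) hs
    rw [map_pow, map_mul, map_pow, map_neg, map_one, map_natCast] at h1
    rw [hS, mul_pow, h1, gaussSum_qchar_sq hnodd h2K hζ]
    have : ((-1 : K) ^ ((n - 1) / 2)) ^ 2 = 1 := by rw [← pow_mul, mul_comm, pow_mul]; simp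
    linear_combination (n : K) ^ 2 * this
  have hS0 : S ≠ 0 := by
    intro h
    rw [h, zero_pow two_ne_zero] at hS2
    exact pow_ne_zero 2 hnK hS2.symm
  -- `s δ = ε n α` says that `s D - ε n` annihilates `α`, where `D = ∑ χ(r) X ^ r`
  have hδ : ∀ ε : ℤ, algebraMap Fq FQ s * δ = ε * ((n : FQ) * α) ↔
      ∀ b ∈ W, qchar n K b * S = ε * (n : K) := by
    intro ε
    set P : Fq[X] := C s * ∑ r ∈ Finset.Icc 1 (n - 1), C ((legendreSym n r : ℤ) : Fq) * X ^ r -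
      C ((ε : Fq) * n) with hP
    have hPl : lineval (Fintype.card Fq) P α = algebraMap Fq FQ s * δ - ε * ((n : FQ) * α) := by
      rw [lineval_eq_aeval_s14, hP]
      simp only [map_sub, map_mul, map_sum, map_pow, aeval_C, aeval_X, LinearMap.sub_apply,
        Module.End.mul_apply, LinearMap.sum_apply, Module.algebraMap_end_apply, frob_pow_apply,
        Algebra.smul_def, map_intCast, map_natCast]
      simp [δ, Finset.mul_sum]
    rw [← sub_eq_zero, ← hPl, hlin]
    refine forall₂_congr fun b hb => ?_
    have hb0 : b ≠ 0 := fun h0 => hW0 (h0 ▸ hb)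
    rw [← sub_eq_zero (a := qchar n K b * S), hP]
    simp only [map_sub, map_mul, map_sum, map_pow, aeval_C, aeval_X, map_intCast, map_natCast]
    rw [sum_legendreSym_mul_pow hζ hb0, mul_left_comm]
  have hδ1 := hδ 1
  have hδ2 := hδ (-1)
  rw [Int.cast_one, Int.cast_one, one_mul, one_mul] at hδ1
  rw [Int.cast_neg, Int.cast_one, Int.cast_neg, Int.cast_one, neg_one_mul, neg_one_mul] at hδ2
  have hchar : ∀ b c : ZMod n, b ≠ 0 → c ≠ 0 →
      quadraticChar (ZMod n) b ≠ quadraticChar (ZMod n) c →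
      quadraticChar (ZMod n) b = - quadraticChar (ZMod n) c := by
    intro b c hb hc h
    rcases quadraticChar_dichotomy hb with h1 | h1 <;>
      rcases quadraticChar_dichotomy hc with h2 | h2 <;> simp_all
  have hgeom : ∀ b ≠ 0, aeval (e b) (∑ i ∈ Finset.range n, X ^ i : Fq[X]) = 0 := by
    intro b hb
    have hb1 : e b ≠ 1 := fun h => hb (by
      rw [← AddChar.map_zero_eq_one e] at h
      exact zmodChar_injective hζ h)
    have hgs := geom_sum_mul (e b) n
    rw [zmodChar_pow hζ b, sub_self] at hgs
    simpa using (mul_eq_zero.1 hgs).resolve_right (sub_ne_zero.2 hb1)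
  constructor
  · rintro ⟨h1, h2⟩
    rw [Ne, hδ1] at h1
    rw [Ne, hδ2] at h2
    have hWall : W = {0}ᶜ := by
      refine Set.eq_of_subset_of_subset (fun b hb h0 => hW0 (h0 ▸ hb)) fun b hb => ?_
      by_contra hbW
      -- otherwise `W` has constant quadratic character
      obtain ⟨c, hc⟩ := hWne
      have hcon : ∀ a ∈ W, quadraticChar (ZMod n) a = quadraticChar (ZMod n) c := by
        have hno : ∀ a ∈ W, quadraticChar (ZMod n) b ≠ quadraticChar (ZMod n) a := by
          intro a ha h
          obtain ⟨i, -, rfl⟩ := horb b a ha h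
          exact hbW ((hWpow i a).2 ha)
        intro a ha
        have ha' := hchar b a hb (fun h0 => hW0 (h0 ▸ ha)) (hno a ha)
        have hc' := hchar b c hb (fun h0 => hW0 (h0 ▸ hc)) (hno c hc)
        omega
      have hq2 : (qchar n K c * S) ^ 2 = (n : K) ^ 2 := by
        rw [mul_pow, hS2, qchar_apply, ← Int.cast_pow,
          quadraticChar_sq_one (fun h0 => hW0 (h0 ▸ hc)), Int.cast_one, one_mul]
      rcases sq_eq_sq_iff_eq_or_eq_neg.1 hq2 with h | h
      · exact h1 fun a ha => by rw [← h, qchar_apply, qchar_apply, hcon a ha]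
      · exact h2 fun a ha => by rw [← h, qchar_apply, qchar_apply, hcon a ha]
    refine ⟨(hker 1).2 (by simp [hWall]), monic_geom_sum_X hn0.ne', ?_, fun f hf => ?_⟩
    · rw [hlin]
      exact fun b hb => hgeom b fun h0 => hW0 (h0 ▸ hb)
    · rw [hlin, hWall] at hf
      -- adding the root `1` makes all `n`-th roots of unity zeros
      have hdvd : (X ^ n - 1 : Fq[X]) ∣ f * (X - 1) := by
        refine X_pow_sub_one_dvd hζ fun b => ?_
        by_cases hb : b = 0
        · simp [hb]
        · rw [map_mul, hf b hb, zero_mul]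
      rw [← geom_sum_mul] at hdvd
      exact (mul_dvd_mul_iff_right (X_sub_C_ne_zero (1 : Fq))).1 (by simpa using hdvd)
  · intro h
    obtain ⟨c, hc⟩ := hWne
    have hc0 : c ≠ 0 := fun h0 => hW0 (h0 ▸ hc)
    have hcon : ∀ a ∈ W, quadraticChar (ZMod n) a = quadraticChar (ZMod n) c := by
      intro a ha
      by_contra hac
      have ha' := hchar a c (fun h0 => hW0 (h0 ▸ ha)) hc0 hac
      have hcS : qchar n K c * S ≠ 0 := by
        refine mul_ne_zero ?_ hS0
        intro h0
        have := quadraticChar_sq_one hc0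
        have h3 : (qchar n K c) ^ 2 = 1 := by
          rw [qchar_apply, ← Int.cast_pow, this, Int.cast_one]
        rw [h0] at h3
        simp at h3
      have h3 : qchar n K a * S = qchar n K c * S := by
        rcases h with h | h
        · rw [hδ1.1 h a ha, hδ1.1 h c hc]
        · rw [hδ2.1 h a ha, hδ2.1 h c hc]
      rw [qchar_apply a, ha', Int.cast_neg, ← qchar_apply c] at h3
      exact mul_ne_zero h2K hcS (by linear_combination -h3)
    -- `W` is a single orbit of multiplication by `q`
    have hWimg : W = (fun i => (Fintype.card Fq : ZMod n) ^ i * c) ''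
        (Finset.range ((n - 1) / 2) : Set ℕ) := by
      ext b
      constructor
      · intro hb
        obtain ⟨i, hi, rfl⟩ := horb b c hc (hcon b hb)
        exact ⟨i, by simpa using hi, rfl⟩
      · rintro ⟨i, -, rfl⟩
        exact (hWpow i c).2 hc
    have hWcard : W.ncard = (n - 1) / 2 := by
      rw [hWimg, Set.InjOn.ncard_image, Set.ncard_coe_finset, Finset.card_range]
      intro i hi j hj hij
      have hij' := mul_right_cancel₀ hc0 hij
      refine pow_injOn_Iio_orderOf ?_ ?_ hij' <;> rw [horder]
      · simpa using hi
      · simpa using hj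
    have hXn : aeval (e c) (X ^ n - 1 : Fq[X]) = 0 := by simp [he, zmodChar_pow hζ c]
    have hint : IsIntegral Fq (e c) :=
      ⟨X ^ n - 1, monic_X_pow_sub_C 1 hn0.ne', by simpa [aeval_def] using hXn⟩
    -- Frobenius permutes the zeros of `f`, so vanishing at one point of the orbit suffices
    have hmin : ∀ f : Fq[X], lineval (Fintype.card Fq) f α = 0 ↔ minpoly Fq (e c) ∣ f := by
      intro f
      rw [hlin]
      constructor
      · intro hf
        exact minpoly.dvd _ _ (hf c hc)
      · intro hf b hb
        obtain ⟨i, -, rfl⟩ := horb b c hc (hcon b hb)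
        rw [← Nat.cast_pow, he, zmodChar_natCast_mul hζ, aeval_pow_card_pow, ← he,
          aeval_eq_zero_of_dvd_aeval_eq_zero hf (minpoly.aeval _ _), zero_pow]
        exact pow_ne_zero _ Fintype.card_ne_zero
    refine ⟨(hker _).2 ?_, minpoly Fq (e c), minpoly.monic hint, minpoly.irreducible hint, ?_,
      minpoly.dvd _ _ hXn, minpoly.monic hint, (hmin _).2 dvd_rfl, fun g hg => (hmin g).1 hg⟩
    · rw [Set.ncard_compl, hWcard, Nat.card_eq_fintype_card, ZMod.card]
      obtain ⟨k, rfl⟩ := hnodd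
      omega
    · have hcop : p.Coprime n := (Nat.coprime_primes hp hnp.out).2 hne.symm
      have hcyc : minpoly Fq (e c) ∣ cyclotomic n Fq := by
        rw [cyclotomic_prime]
        exact minpoly.dvd _ _ (hgeom c hc0)
      rw [natDegree_of_dvd_cyclotomic_of_irreducible hq hcop hcyc (minpoly.irreducible hint),
        ← horder, ← orderOf_units, ZMod.coe_unitOfCoprime, hq]
end
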